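/- arXiv:1505.04452 — 3 statements merged into one kernel-verified Lean document; each statement's English description precedes it below -/
import Mathlib

section
/- Let S ⊆ Q be a subset of the Hilbert cube such that S meets every continuum from the face W_1^+ to the face W_1^-. Then S (with the subspace topology) is strongly infinite dimensional. -/
open Set

/-- A separator between `A` and `B` in a topological space: a closed set `L` whose
complement is the union of two disjoint open sets containing `A` and `B` respectively. -/
def IsSeparator {X : Type*} [TopologicalSpace X] (A B L : Set X) : Prop :=
  IsClosed L ∧ ∃ U V : Set X, IsOpen U ∧ IsOpen V ∧ Disjoint U V ∧
    A ⊆ U ∧ B ⊆ V ∧ Lᶜ = U ∪ V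

/-- A family of pairs of sets is essential if every choice of separators has
nonempty intersection. -/
def IsEssentialFamily {X : Type*} [TopologicalSpace X] {Γ : Type*}
    (A B : Γ → Set X) : Prop :=
  ∀ L : Γ → Set X, (∀ i, IsSeparator (A i) (B i) (L i)) → (⋂ i, L i).Nonempty

/-- A space is strongly infinite dimensional if it admits a countably infinite
essential family of pairs of disjoint closed subsets. -/
def StronglyInfiniteDimensional (X : Type*) [TopologicalSpace X] : Prop :=
  ∃ A B : ℕ → Set X,
    (∀ n, IsClosed (A n) ∧ IsClosed (B n) ∧ Disjoint (A n) (B n)) ∧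
    IsEssentialFamily A B

/-- The Hilbert cube `Q = [-1,1]^ℕ`. -/
abbrev HilbertCube : Type := ℕ → Set.Icc (-1 : ℝ) 1

/-- The negative face `W_i^- = {x ∈ Q : x_i = -1}`. -/
def negFace (i : ℕ) : Set HilbertCube := {x | (x i : ℝ) = -1}

/-- The positive face `W_i^+ = {x ∈ Q : x_i = 1}`. -/
def posFace (i : ℕ) : Set HilbertCube := {x | (x i : ℝ) = 1}

/-!
Let `(A n, B n)` be an essential sequence of pairs of closed sets in a hereditarily normal compact
space, and thicken each pair to disjoint closed neighbourhoods. A separator in `S` between the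
traces of the thickened sets extends to a separator `M n` of `A n` and `B n` in the whole space
(this is where hereditary normality and the thickening enter). If `⋂ n ≥ 1, M n` contained no
continuum from `A 0` to `B 0`, then, components being quasi-components in a compact space, it could
be avoided by a separator of `A 0` and `B 0`, contradicting essentiality. So it contains such a
continuum, and this continuum meets `S` in a common point of the given separators.

That opposite faces of a cube form an essential family reduces by compactness to finite dimensions
and, on a fine grid, to a statement about functions `φ i` on the lattice stepping from 0 to 1 in
direction `i`: some unit cube carries no constant `φ i`. Here one uses mod-2 cubical cochains. Cup
product with `δφ` is the commutator of the coboundary `δ` with multiplication by `φ`, so it commutes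
with `δ` because `δ² = 0`. Hence replacing the `φ i` by coordinate steps changes the product of all
`δ(φ i)` only by the coboundary of a finitely supported cochain, and its total mass stays 1.
-/

open Topology

section Separators

variable {X Y Γ : Type*} [TopologicalSpace X] [TopologicalSpace Y]

lemma IsSeparator.preimage {f : Y → X} (hf : Continuous f) {A B L : Set X}
    (hL : IsSeparator A B L) : IsSeparator (f ⁻¹' A) (f ⁻¹' B) (f ⁻¹' L) := by
  obtain ⟨hLc, U, V, hU, hV, hUV, hAU, hBV, hLUV⟩ := hL
  exact ⟨hLc.preimage hf, f ⁻¹' U, f ⁻¹' V, hU.preimage hf, hV.preimage hf, hUV.preimage f,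
    preimage_mono hAU, preimage_mono hBV, by rw [← preimage_compl, hLUV, preimage_union]⟩

lemma isSeparator_compl_union {A B U V : Set X} (hU : IsOpen U) (hV : IsOpen V)
    (hUV : Disjoint U V) (hAU : A ⊆ U) (hBV : B ⊆ V) : IsSeparator A B (U ∪ V)ᶜ :=
  ⟨(hU.union hV).isClosed_compl, U, V, hU, hV, hUV, hAU, hBV, compl_compl _⟩

lemma IsEssentialFamily.of_preimage {f : Y → X} (hf : Continuous f) {A B : Γ → Set X}
    (h : IsEssentialFamily (fun i => f ⁻¹' A i) fun i => f ⁻¹' B i) : IsEssentialFamily A B := by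
  intro L hL
  obtain ⟨y, hy⟩ := h (fun i => f ⁻¹' L i) fun i => (hL i).preimage hf
  exact ⟨f y, mem_iInter.2 fun i => mem_iInter.1 hy i⟩

lemma isEssentialFamily_of_finset_subfamilies [CompactSpace X] {A B : Γ → Set X}
    (h : ∀ t : Finset Γ, IsEssentialFamily (fun i : t => A i) fun i : t => B i) :
    IsEssentialFamily A B := by
  intro L hL
  have hfin : ∀ t : Finset Γ, (univ ∩ ⋂ i ∈ t, L i).Nonempty := fun t => by
    simpa only [univ_inter, iInter_subtype] using h t (fun i => L i) fun i => hL i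
  simpa only [univ_inter] using isCompact_univ.inter_iInter_nonempty L (fun i => (hL i).1) hfin

lemma exists_disjoint_isClosed_mem_nhdsSet [NormalSpace X] {A B : Set X} (hA : IsClosed A)
    (hB : IsClosed B) (hAB : Disjoint A B) :
    ∃ A' ∈ 𝓝ˢ A, ∃ B' ∈ 𝓝ˢ B, IsClosed A' ∧ IsClosed B' ∧ Disjoint A' B' := by
  obtain ⟨A', ⟨hA', hA'c⟩, B', ⟨hB', hB'c⟩, hAB'⟩ :=
    ((closed_nhdsSet_basis A hA).disjoint_iff (closed_nhdsSet_basis B hB)).1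
      (disjoint_nhdsSet_nhdsSet hA hB hAB)
  exact ⟨A', hA', B', hB', hA'c, hB'c, hAB'⟩

lemma disjoint_closure_image_val_union {S A B B' : Set X} {U V : Set S} (hA : IsClosed A)
    (hAB : Disjoint A B) (hB' : B' ∈ 𝓝ˢ B) (hV : IsOpen V) (hUV : Disjoint U V)
    (hAU : Subtype.val ⁻¹' A ⊆ U) (hBV : Subtype.val ⁻¹' B' ⊆ V) :
    Disjoint (closure (Subtype.val '' U ∪ A)) (Subtype.val '' V ∪ B) := by
  obtain ⟨O, hO, rfl⟩ := isOpen_induced_iff.1 hV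
  have hVO : Subtype.val '' (Subtype.val ⁻¹' O : Set S) ∪ B ⊆ O ∪ interior B' :=
    union_subset_union (image_preimage_subset _ _) (subset_interior_iff_mem_nhdsSet.2 hB')
  have hU : Disjoint (Subtype.val '' U) (O ∪ interior B') := by
    rw [disjoint_image_left, preimage_union]
    exact hUV.mono_right (union_subset Subset.rfl ((preimage_mono interior_subset).trans hBV))
  have hAV : Disjoint A (Subtype.val '' (Subtype.val ⁻¹' O : Set S)) := by
    rw [disjoint_image_right]
    exact hUV.mono_left hAU
  rw [closure_union, hA.closure_eq, disjoint_union_left]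
  exact ⟨(hU.closure_left (hO.union isOpen_interior)).mono_right hVO,
    disjoint_union_right.2 ⟨hAV, hAB⟩⟩

lemma IsSeparator.exists_extension [CompletelyNormalSpace X] {S A B A' B' : Set X} {L : Set S}
    (hA : IsClosed A) (hB : IsClosed B) (hAB : Disjoint A B) (hA' : A' ∈ 𝓝ˢ A) (hB' : B' ∈ 𝓝ˢ B)
    (hL : IsSeparator (Subtype.val ⁻¹' A') (Subtype.val ⁻¹' B') L) :
    ∃ M : Set X, IsSeparator A B M ∧ Subtype.val ⁻¹' M ⊆ L := by
  obtain ⟨-, U, V, hU, hV, hUV, hAU, hBV, hLUV⟩ := hL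
  have hAU' := (preimage_mono (subset_of_mem_nhdsSet hA')).trans hAU
  have hBV' := (preimage_mono (subset_of_mem_nhdsSet hB')).trans hBV
  obtain ⟨U', V', hU', hV', hUU', hVV', hUV'⟩ := separatedNhds_iff_disjoint.2 <|
    CompletelyNormalSpace.completely_normal
      (disjoint_closure_image_val_union hA hAB hB' hV hUV hAU' hBV)
      (disjoint_closure_image_val_union hB hAB.symm hA' hU hUV.symm hBV' hAU).symm
  refine ⟨(U' ∪ V')ᶜ, isSeparator_compl_union hU' hV' hUV' (subset_union_right.trans hUU')
    (subset_union_right.trans hVV'), ?_⟩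
  rw [preimage_compl, compl_subset_comm, hLUV]
  exact union_subset_union (image_subset_iff.1 (subset_union_left.trans hUU'))
    (image_subset_iff.1 (subset_union_left.trans hVV'))

end Separators

lemma sum_sum_erase_eq_zero_of_symm {ι R : Type*} [DecidableEq ι] [CommRing R] [CharP R 2]
    (D : Finset ι) {f : ι → ι → R} (hf : ∀ a b, f a b = f b a) :
    ∑ a ∈ D, ∑ b ∈ D.erase a, f a b = 0 := by
  rw [Finset.sum_sigma']
  refine Finset.sum_involution (fun p _ => ⟨p.2, p.1⟩) ?_ ?_ ?_ fun _ _ => rfl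
  · rintro ⟨a, b⟩ _
    exact hf a b ▸ CharTwo.add_self_eq_zero _
  · rintro ⟨a, b⟩ hp _ hab
    exact (Finset.mem_erase.1 (Finset.mem_sigma.1 hp).2).1 (congrArg Sigma.fst hab)
  · rintro ⟨a, b⟩ hp
    simp only [Finset.mem_sigma, Finset.mem_erase] at hp ⊢
    exact ⟨hp.2.2, hp.2.1.symm, hp.1⟩

/-- Mod-2 cubical cochains on the lattice `ι → ℤ` of all degrees at once: `F x D` is the value of
`F` on the cube with lowest vertex `x` and edge directions `D`. -/
abbrev LatticeCochain (ι : Type*) : Type _ := (ι → ℤ) → Finset ι → ZMod 2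

namespace LatticeCochain

variable {ι : Type*}

/-- Multiplication of a cochain by a function on the vertices, evaluated at the lowest vertex of
each cube; this is the cup product with a 0-cochain from the left. -/
def smulVertex (φ : (ι → ℤ) → ZMod 2) : Module.End (ZMod 2) (LatticeCochain ι) where
  toFun F x D := φ x * F x D
  map_add' F G := by ext x D; exact mul_add _ _ _
  map_smul' c F := by ext x D; exact mul_left_comm _ _ _

lemma smulVertex_apply (φ : (ι → ℤ) → ZMod 2) (F : LatticeCochain ι) (x : ι → ℤ) (D : Finset ι) :
    smulVertex φ F x D = φ x * F x D := rfl

/-- The support of the cochain is bounded in the `i`-th coordinate direction. -/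
def BoundedAlong (i : ι) (F : LatticeCochain ι) : Prop :=
  ∃ M : ℤ, ∀ x D, M < |x i| → F x D = 0

/-- The vertex function `φ` is `0` far out in the negative and `1` far out in the positive `i`-th
coordinate direction, uniformly in the remaining coordinates. -/
def IsStepAlong (i : ι) (φ : (ι → ℤ) → ZMod 2) : Prop :=
  ∃ N : ℤ, ∀ x, (x i < -N → φ x = 0) ∧ (N < x i → φ x = 1)

lemma BoundedAlong.add {i : ι} {F G : LatticeCochain ι} (hF : BoundedAlong i F)
    (hG : BoundedAlong i G) : BoundedAlong i (F + G) := by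
  obtain ⟨M, hM⟩ := hF
  obtain ⟨N, hN⟩ := hG
  refine ⟨max M N, fun x D hx => ?_⟩
  obtain ⟨hMx, hNx⟩ := max_lt_iff.1 hx
  rw [Pi.add_apply, Pi.add_apply, hM x D hMx, hN x D hNx, add_zero]

protected lemma BoundedAlong.smulVertex {i : ι} {F : LatticeCochain ι} (φ : (ι → ℤ) → ZMod 2)
    (hF : BoundedAlong i F) :
    BoundedAlong i (smulVertex φ F) := by
  obtain ⟨M, hM⟩ := hF
  exact ⟨M, fun x D hx => by rw [smulVertex_apply, hM x D hx, mul_zero]⟩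

lemma IsStepAlong.boundedAlong_smulVertex_sub {i : ι} {φ χ : (ι → ℤ) → ZMod 2}
    (hφ : IsStepAlong i φ) (hχ : IsStepAlong i χ) (F : LatticeCochain ι) :
    BoundedAlong i (smulVertex (φ - χ) F) := by
  obtain ⟨M, hM⟩ := hφ
  obtain ⟨N, hN⟩ := hχ
  refine ⟨max M N, fun x D hx => ?_⟩
  suffices φ x = χ x by rw [smulVertex_apply, Pi.sub_apply, this, sub_self, zero_mul]
  obtain hpos | hneg := lt_abs.1 hx
  · rw [(hM x).2 (by omega), (hN x).2 (by omega)]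
  · rw [(hM x).1 (by omega), (hN x).1 (by omega)]

/-- The model step function in direction `i`, jumping between `x i = 0` and `x i = 1`. -/
def unitStep (i : ι) (x : ι → ℤ) : ZMod 2 := if 0 < x i then 1 else 0

lemma isStepAlong_unitStep (i : ι) : IsStepAlong i (unitStep i) :=
  ⟨0, fun _ => ⟨fun hx => if_neg (by omega), fun hx => if_pos hx⟩⟩

lemma hasFiniteSupport_of_boundedAlong [Finite ι] {F : LatticeCochain ι}
    (hF : ∀ i, BoundedAlong i F) (D : Finset ι) : Function.HasFiniteSupport fun x => F x D := by
  classical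
  have := Fintype.ofFinite ι
  choose M hM using hF
  refine (finite_Icc (-M) M).subset fun x hx => ?_
  have hxM : ∀ i, |x i| ≤ M i := fun i => not_lt.1 fun h => hx (hM i x D h)
  exact ⟨fun i => (abs_le.1 (hxM i)).1, fun i => (abs_le.1 (hxM i)).2⟩

variable [DecidableEq ι]

/-- The cubical coboundary. Each `D.erase d`-face occurs twice in the boundary of a `D`-cube, at
`x` and at `x + e_d`; modulo 2 no further signs are needed. -/
def coboundary : Module.End (ZMod 2) (LatticeCochain ι) where
  toFun F x D := ∑ d ∈ D, (F (x + Pi.single d 1) (D.erase d) - F x (D.erase d))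
  map_add' F G := by
    ext x D
    simp only [Pi.add_apply, ← Finset.sum_add_distrib, add_sub_add_comm]
  map_smul' c F := by
    ext x D
    simp only [Pi.smul_apply, ← smul_sub, ← Finset.smul_sum, RingHom.id_apply]

lemma coboundary_apply (F : LatticeCochain ι) (x : ι → ℤ) (D : Finset ι) :
    coboundary F x D = ∑ d ∈ D, (F (x + Pi.single d 1) (D.erase d) - F x (D.erase d)) := rfl

lemma coboundary_mul_coboundary : (coboundary : Module.End (ZMod 2) (LatticeCochain ι)) *
    coboundary = 0 := by
  ext F x D
  simp only [Module.End.mul_apply, coboundary_apply, ← Finset.sum_sub_distrib]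
  refine sum_sum_erase_eq_zero_of_symm D fun a b => ?_
  rw [Finset.erase_right_comm, add_right_comm]
  ring

/-- Cup product from the left with the coboundary of the 0-cochain `φ`. By the Leibniz rule this is
the commutator of the coboundary with multiplication by `φ`. -/
def cupDiff (φ : (ι → ℤ) → ZMod 2) : Module.End (ZMod 2) (LatticeCochain ι) :=
  coboundary * smulVertex φ - smulVertex φ * coboundary

lemma cupDiff_apply (φ : (ι → ℤ) → ZMod 2) (F : LatticeCochain ι) (x : ι → ℤ) (D : Finset ι) :
    cupDiff φ F x D =
      ∑ d ∈ D, (φ (x + Pi.single d 1) - φ x) * F (x + Pi.single d 1) (D.erase d) := by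
  simp only [cupDiff, LinearMap.sub_apply, Module.End.mul_apply, Pi.sub_apply, coboundary_apply,
    smulVertex_apply, Finset.mul_sum, ← Finset.sum_sub_distrib]
  exact Finset.sum_congr rfl fun d _ => by ring

lemma cupDiff_sub (φ χ : (ι → ℤ) → ZMod 2) : cupDiff (φ - χ) = cupDiff φ - cupDiff χ := by
  ext F x D
  simp only [cupDiff_apply, LinearMap.sub_apply, Pi.sub_apply, ← Finset.sum_sub_distrib]
  exact Finset.sum_congr rfl fun d _ => by ring

lemma commute_coboundary_cupDiff (φ : (ι → ℤ) → ZMod 2) : Commute coboundary (cupDiff φ) := by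
  rw [commute_iff_eq, cupDiff, mul_sub, sub_mul, ← mul_assoc, coboundary_mul_coboundary, zero_mul,
    zero_sub, mul_assoc (smulVertex φ), coboundary_mul_coboundary, mul_zero, sub_zero, mul_assoc]
  exact ZModModule.neg_eq_self _

protected lemma BoundedAlong.cupDiff {i : ι} {F : LatticeCochain ι} (φ : (ι → ℤ) → ZMod 2)
    (hF : BoundedAlong i F) : BoundedAlong i (cupDiff φ F) := by
  obtain ⟨M, hM⟩ := hF
  refine ⟨M + 1, fun x D hx => ?_⟩
  rw [cupDiff_apply]
  refine Finset.sum_eq_zero fun d _ => ?_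
  rw [hM _ _ ?_, mul_zero]
  obtain rfl | hid := eq_or_ne i d
  · rw [Pi.add_apply, Pi.single_eq_same]
    grind
  · rw [Pi.add_apply, Pi.single_eq_of_ne hid]
    grind

lemma IsStepAlong.boundedAlong_cupDiff {i : ι} {φ : (ι → ℤ) → ZMod 2} (hφ : IsStepAlong i φ)
    (F : LatticeCochain ι) :
    BoundedAlong i (cupDiff φ F) := by
  obtain ⟨N, hN⟩ := hφ
  refine ⟨N + 1, fun x D hx => ?_⟩
  rw [cupDiff_apply]
  refine Finset.sum_eq_zero fun d _ => ?_
  have hd : x i ≤ (x + Pi.single d 1 : ι → ℤ) i ∧ (x + Pi.single d 1 : ι → ℤ) i ≤ x i + 1 := by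
    rw [Pi.add_apply, Pi.single_apply]
    grind
  suffices φ (x + Pi.single d 1) = φ x by rw [this, sub_self, zero_mul]
  obtain hpos | hneg := lt_abs.1 hx
  · rw [(hN _).2 (by omega), (hN x).2 (by omega)]
  · rw [(hN _).1 (by omega), (hN x).1 (by omega)]

/-- The cup product of the coboundaries of the 0-cochains in `l`. -/
def cupDiffs (l : List ((ι → ℤ) → ZMod 2)) : LatticeCochain ι :=
  (l.map cupDiff).prod 1

lemma cupDiffs_cons (φ : (ι → ℤ) → ZMod 2) (l : List ((ι → ℤ) → ZMod 2)) :
    cupDiffs (φ :: l) = cupDiff φ (cupDiffs l) := by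
  rw [cupDiffs, List.map_cons, List.prod_cons, Module.End.mul_apply, cupDiffs]

lemma coboundary_cupDiffs (l : List ((ι → ℤ) → ZMod 2)) : coboundary (cupDiffs l) = 0 := by
  have hcomm : Commute coboundary (l.map cupDiff).prod :=
    Commute.list_prod_right _ _ (List.forall_mem_map.2 fun φ _ => commute_coboundary_cupDiff φ)
  have hone : coboundary (1 : LatticeCochain ι) = 0 := by
    ext x D
    exact Finset.sum_eq_zero fun d _ => sub_self _
  rw [cupDiffs, ← Module.End.mul_apply, hcomm.eq, Module.End.mul_apply, hone, map_zero]

lemma cupDiff_cupDiffs_eq_coboundary (ψ : (ι → ℤ) → ZMod 2) (l : List ((ι → ℤ) → ZMod 2)) :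
    cupDiff ψ (cupDiffs l) = coboundary (smulVertex ψ (cupDiffs l)) := by
  rw [cupDiff, LinearMap.sub_apply, Module.End.mul_apply, Module.End.mul_apply,
    coboundary_cupDiffs, map_zero, sub_zero]

lemma exists_mem_Icc_ne_of_cupDiffs_ne_zero {l : List ((ι → ℤ) → ZMod 2)} {φ : (ι → ℤ) → ZMod 2}
    (hφ : φ ∈ l) {x : ι → ℤ} {D : Finset ι} (h : cupDiffs l x D ≠ 0) :
    ∃ y ∈ Icc x (x + ∑ d ∈ D, Pi.single d 1), ∃ z ∈ Icc x (x + ∑ d ∈ D, Pi.single d 1),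
      φ y ≠ φ z := by
  induction l generalizing x D with
  | nil => exact absurd hφ List.not_mem_nil
  | cons ψ l ih =>
    rw [cupDiffs_cons, cupDiff_apply] at h
    obtain ⟨d, hd, hne⟩ := Finset.exists_ne_zero_of_sum_ne_zero h
    have hsingle : (0 : ι → ℤ) ≤ Pi.single d 1 := Pi.single_nonneg.2 zero_le_one
    have hx : x ≤ x + Pi.single d 1 := le_add_of_nonneg_right hsingle
    have hsum : x + Pi.single d 1 + ∑ e ∈ D.erase d, Pi.single e 1 =
        x + ∑ e ∈ D, Pi.single e 1 := by
      rw [add_assoc, Finset.add_sum_erase D (fun e => (Pi.single e 1 : ι → ℤ)) hd]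
    have hx' : x + Pi.single d 1 ≤ x + ∑ e ∈ D, Pi.single e 1 :=
      hsum ▸ le_add_of_nonneg_right
        (Finset.sum_nonneg fun e _ => Pi.single_nonneg.2 (zero_le_one' ℤ))
    obtain rfl | hφl := List.mem_cons.1 hφ
    · exact ⟨_, ⟨hx, hx'⟩, x, ⟨le_rfl, hx.trans hx'⟩, sub_ne_zero.1 (left_ne_zero_of_mul hne)⟩
    · obtain ⟨y, hy, z, hz, hyz⟩ := ih hφl (right_ne_zero_of_mul hne)
      rw [hsum] at hy hz
      exact ⟨y, Icc_subset_Icc_left hx hy, z, Icc_subset_Icc_left hx hz, hyz⟩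

lemma boundedAlong_cupDiffs {φ : ι → (ι → ℤ) → ZMod 2} (hφ : ∀ i, IsStepAlong i (φ i)) {i : ι}
    {l : List ι} (hi : i ∈ l) : BoundedAlong i (cupDiffs (l.map φ)) := by
  induction l with
  | nil => exact absurd hi List.not_mem_nil
  | cons j l ih =>
    rw [List.map_cons, cupDiffs_cons]
    obtain rfl | hil := List.mem_cons.1 hi
    · exact (hφ i).boundedAlong_cupDiff _
    · exact (ih hil).cupDiff _

-- Exchanging `φ i` for `χ i` one slot at a time changes the product by a coboundary.
lemma exists_cupDiffs_sub_cupDiffs_eq_coboundary {φ χ : ι → (ι → ℤ) → ZMod 2}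
    (hφ : ∀ i, IsStepAlong i (φ i)) (hχ : ∀ i, IsStepAlong i (χ i)) (l : List ι) :
    ∃ H : LatticeCochain ι, cupDiffs (l.map φ) - cupDiffs (l.map χ) = coboundary H ∧
      ∀ i ∈ l, BoundedAlong i H := by
  induction l with
  | nil => exact ⟨0, by simp only [List.map_nil, sub_self, map_zero], by simp⟩
  | cons i l ih =>
    obtain ⟨H, hH, hHl⟩ := ih
    refine ⟨cupDiff (φ i) H + smulVertex (φ i - χ i) (cupDiffs (l.map χ)), ?_, fun j hj => ?_⟩
    · calc cupDiffs ((i :: l).map φ) - cupDiffs ((i :: l).map χ)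
        _ = cupDiff (φ i) (cupDiffs (l.map φ) - cupDiffs (l.map χ)) +
            cupDiff (φ i - χ i) (cupDiffs (l.map χ)) := by
          rw [List.map_cons, List.map_cons, cupDiffs_cons, cupDiffs_cons, map_sub, cupDiff_sub,
            LinearMap.sub_apply, sub_add_sub_cancel]
        _ = coboundary (cupDiff (φ i) H) +
            coboundary (smulVertex (φ i - χ i) (cupDiffs (l.map χ))) := by
          rw [hH, ← Module.End.mul_apply, ← (commute_coboundary_cupDiff (φ i)).eq,
            Module.End.mul_apply, cupDiff_cupDiffs_eq_coboundary]
        _ = _ := (map_add _ _ _).symm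
    · obtain rfl | hjl := List.mem_cons.1 hj
      · exact ((hφ j).boundedAlong_cupDiff H).add ((hφ j).boundedAlong_smulVertex_sub (hχ j) _)
      · exact ((hHl j hjl).cupDiff _).add ((boundedAlong_cupDiffs hχ hjl).smulVertex _)

lemma cupDiff_unitStep_apply {i : ι} {D : Finset ι} (hi : i ∈ D) (F : LatticeCochain ι)
    (x : ι → ℤ) :
    cupDiff (unitStep i) F x D = if x i = 0 then F (x + Pi.single i 1) (D.erase i) else 0 := by
  rw [cupDiff_apply, Finset.sum_eq_single_of_mem i hi]
  · simp only [unitStep, Pi.add_apply, Pi.single_eq_same]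
    split_ifs <;> first | omega | simp
  · intro d _ hd
    simp only [unitStep, Pi.add_apply, Pi.single_eq_of_ne hd.symm, add_zero, sub_self, zero_mul]

lemma cupDiffs_unitStep_apply {l : List ι} (hl : l.Nodup) (x : ι → ℤ) :
    cupDiffs (l.map unitStep) x l.toFinset = if ∀ i ∈ l, x i = 0 then 1 else 0 := by
  induction l generalizing x with
  | nil => simp [cupDiffs]
  | cons i l ih =>
    obtain ⟨hil, hl⟩ := List.nodup_cons.1 hl
    have herase : (i :: l).toFinset.erase i = l.toFinset := by
      rw [List.toFinset_cons, Finset.erase_insert (mt List.mem_toFinset.1 hil)]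
    have hshift : (∀ j ∈ l, (x + Pi.single i 1 : ι → ℤ) j = 0) ↔ ∀ j ∈ l, x j = 0 :=
      forall₂_congr fun j hj => by
        rw [Pi.add_apply, Pi.single_eq_of_ne (ne_of_mem_of_not_mem hj hil), add_zero]
    rw [List.map_cons, cupDiffs_cons, cupDiff_unitStep_apply (by simp), herase, ih hl]
    simp only [hshift, List.forall_mem_cons, ite_and]

lemma finsum_coboundary [Finite ι] {F : LatticeCochain ι} (hF : ∀ i, BoundedAlong i F)
    (D : Finset ι) : ∑ᶠ x, coboundary F x D = 0 := by
  have hfin : ∀ d, Function.HasFiniteSupport fun x => F x (D.erase d) := fun d =>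
    hasFiniteSupport_of_boundedAlong hF _
  have hfin' : ∀ d, Function.HasFiniteSupport fun x : ι → ℤ => F (x + Pi.single d 1) (D.erase d) :=
    fun d => (hfin d).preimage (add_left_injective _).injOn
  simp only [coboundary_apply]
  rw [finsum_sum_comm D (fun x d => F (x + Pi.single d 1) (D.erase d) - F x (D.erase d)) fun d _ =>
    (hfin' d).sub (hfin d)]
  refine Finset.sum_eq_zero fun d _ => ?_
  rw [finsum_sub_distrib (hfin' d) (hfin d), sub_eq_zero]
  exact finsum_comp_equiv (Equiv.addRight (Pi.single d (1 : ℤ))) (f := fun x => F x (D.erase d))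

lemma exists_cupDiffs_ne_zero [Fintype ι] {φ : ι → (ι → ℤ) → ZMod 2}
    (hφ : ∀ i, IsStepAlong i (φ i)) :
    ∃ x, cupDiffs (Finset.univ.toList.map φ) x Finset.univ ≠ 0 := by
  by_contra! hzero
  obtain ⟨H, hH, hHb⟩ := exists_cupDiffs_sub_cupDiffs_eq_coboundary hφ isStepAlong_unitStep
    (Finset.univ : Finset ι).toList
  have hunit : ∀ x : ι → ℤ, cupDiffs (Finset.univ.toList.map unitStep) x Finset.univ =
      if x = 0 then 1 else 0 := fun x => by
    simpa [funext_iff] using cupDiffs_unitStep_apply (Finset.nodup_toList Finset.univ) x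
  have hcob : ∀ x, coboundary H x Finset.univ = if x = 0 then -1 else 0 := fun x => by
    rw [← hH, Pi.sub_apply, Pi.sub_apply, hzero, hunit, zero_sub]
    split_ifs <;> simp
  have hsum := finsum_coboundary (fun i => hHb i (by simp)) Finset.univ
  rw [finsum_congr hcob, finsum_eq_single _ 0 fun x hx => if_neg hx, if_pos rfl] at hsum
  exact absurd hsum (by decide)

end LatticeCochain

open LatticeCochain in
lemma exists_unitCube_forall_not_constant {ι : Type*} [Finite ι] {φ : ι → (ι → ℤ) → ZMod 2}
    (hφ : ∀ i, IsStepAlong i (φ i)) :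
    ∃ x, ∀ i, ∃ y ∈ Icc x (x + 1), ∃ z ∈ Icc x (x + 1), φ i y ≠ φ i z := by
  classical
  have := Fintype.ofFinite ι
  obtain ⟨x, hx⟩ := exists_cupDiffs_ne_zero hφ
  have hone : ∑ i : ι, Pi.single i (1 : ℤ) = 1 := Finset.univ_sum_single 1
  refine ⟨x, fun i => ?_⟩
  rw [← hone]
  exact exists_mem_Icc_ne_of_cupDiffs_ne_zero (List.mem_map_of_mem (by simp)) hx

section Cube

variable {ι : Type*}

/-- The image of the lattice point `x` under the affine map taking the lattice cube `[0, N]^ι` to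
`[-1, 1]^ι`, clamped to the cube. -/
noncomputable def gridPoint (N : ℕ) (x : ι → ℤ) (i : ι) : Icc (-1 : ℝ) 1 :=
  projIcc (-1) 1 (by norm_num) (-1 + 2 * x i / N)

lemma gridPoint_eq_neg_one {N : ℕ} {x : ι → ℤ} {i : ι} (hx : x i ≤ 0) :
    (gridPoint N x i : ℝ) = -1 := by
  have hx' : (x i : ℝ) ≤ 0 := by exact_mod_cast hx
  have hle : 2 * (x i : ℝ) / N ≤ 0 := div_nonpos_of_nonpos_of_nonneg (by linarith) N.cast_nonneg
  rw [gridPoint, projIcc_of_le_left _ (by linarith)]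

lemma gridPoint_eq_one {N : ℕ} (hN : 0 < N) {x : ι → ℤ} {i : ι} (hx : N ≤ x i) :
    (gridPoint N x i : ℝ) = 1 := by
  have hx' : (N : ℝ) ≤ x i := by exact_mod_cast hx
  have hle : 2 ≤ 2 * (x i : ℝ) / N := by
    rw [le_div_iff₀ (by exact_mod_cast hN)]
    linarith
  rw [gridPoint, projIcc_of_right_le _ (by linarith)]

lemma dist_gridPoint_le [Fintype ι] (N : ℕ) {x y : ι → ℤ} (hy : y ∈ Icc x (x + 1)) :
    dist (gridPoint N y) (gridPoint N x) ≤ 2 / N := by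
  refine (dist_pi_le_iff (by positivity)).2 fun i => ?_
  have hxy : (x i : ℝ) ≤ y i := by exact_mod_cast hy.1 i
  have hyx : (y i : ℝ) ≤ x i + 1 := by exact_mod_cast hy.2 i
  calc dist (gridPoint N y i) (gridPoint N x i)
    _ ≤ |(-1 + 2 * y i / N : ℝ) - (-1 + 2 * x i / N)| := abs_projIcc_sub_projIcc _
    _ = |2 * (y i - x i : ℝ) / N| := by ring_nf
    _ = 2 * (y i - x i : ℝ) / N := abs_of_nonneg (div_nonneg (by linarith) N.cast_nonneg)
    _ ≤ 2 / N := by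
      gcongr
      linarith

lemma isStepAlong_indicator_gridPoint {N : ℕ} (hN : 0 < N) {i : ι}
    {U : Set (ι → Icc (-1 : ℝ) 1)} (hpos : {x | (x i : ℝ) = 1} ⊆ U)
    (hneg : Disjoint {x | (x i : ℝ) = -1} U) :
    LatticeCochain.IsStepAlong i fun x => U.indicator 1 (gridPoint N x) :=
  ⟨N, fun _ => ⟨fun hx => indicator_of_notMem
    (disjoint_left.1 hneg (gridPoint_eq_neg_one (by omega))) _,
    fun hx => indicator_of_mem (hpos (gridPoint_eq_one hN hx.le)) _⟩⟩

lemma isEssentialFamily_cubeFaces_of_finite [Finite ι] :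
    IsEssentialFamily (fun i : ι => {x : ι → Icc (-1 : ℝ) 1 | (x i : ℝ) = 1})
      fun i => {x | (x i : ℝ) = -1} := by
  have := Fintype.ofFinite ι
  intro L hL
  by_contra hempty
  choose _ U V hU hV hUV hposU hnegV hLUV using hL
  have hcover : univ ⊆ ⋃ s, Sum.elim U V s := by
    rw [iUnion_sum]
    simp only [Sum.elim_inl, Sum.elim_inr, ← iUnion_union_distrib, ← hLUV, ← compl_iInter,
      not_nonempty_iff_eq_empty.1 hempty, compl_empty, Subset.rfl]
  obtain ⟨δ, hδ, hball⟩ :=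
    lebesgue_number_lemma_of_metric isCompact_univ (Sum.rec hU hV) hcover
  obtain ⟨N, hN⟩ := exists_nat_gt (2 / δ)
  have hN0 : (0 : ℝ) < N := (div_pos two_pos hδ).trans hN
  obtain ⟨x, hx⟩ := exists_unitCube_forall_not_constant fun i => isStepAlong_indicator_gridPoint
    (Nat.cast_pos.1 hN0) (hposU i) ((hUV i).symm.mono_left (hnegV i))
  have hclose : ∀ y ∈ Icc x (x + 1), gridPoint N y ∈ Metric.ball (gridPoint N x) δ := fun y hy =>
    (dist_gridPoint_le N hy).trans_lt ((div_lt_comm₀ hδ hN0).1 hN)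
  obtain ⟨i | i, hi⟩ := hball (gridPoint N x) (mem_univ _) <;>
    obtain ⟨y, hy, z, hz, hyz⟩ := hx i
  · have hmem : ∀ w ∈ Icc x (x + 1), gridPoint N w ∈ U i := fun w hw => hi (hclose w hw)
    exact hyz (by rw [indicator_of_mem (hmem y hy), indicator_of_mem (hmem z hz)]; rfl)
  · have hnotMem : ∀ w ∈ Icc x (x + 1), gridPoint N w ∉ U i := fun w hw =>
      disjoint_right.1 (hUV i) (hi (hclose w hw))
    exact hyz (by rw [indicator_of_notMem (hnotMem y hy), indicator_of_notMem (hnotMem z hz)])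

lemma isEssentialFamily_cubeFaces (ι : Type*) :
    IsEssentialFamily (fun i : ι => {x : ι → Icc (-1 : ℝ) 1 | (x i : ℝ) = 1})
      fun i => {x | (x i : ℝ) = -1} := by
  classical
  refine isEssentialFamily_of_finset_subfamilies fun t => ?_
  let extend (x : t → Icc (-1 : ℝ) 1) (i : ι) : Icc (-1 : ℝ) 1 :=
    if h : i ∈ t then x ⟨i, h⟩ else ⟨0, by norm_num⟩
  have hextend : Continuous extend := continuous_pi fun i => by
    by_cases h : i ∈ t
    · simpa only [extend, dif_pos h] using continuous_apply _
    · simpa only [extend, dif_neg h] using continuous_const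
  refine IsEssentialFamily.of_preimage hextend ?_
  simpa [extend] using isEssentialFamily_cubeFaces_of_finite (ι := t)

end Cube

section Continua

variable {X Γ : Type*} [TopologicalSpace X] [CompactSpace X] [T2Space X]

lemma exists_isClopen_of_disjoint_connectedComponent {A B : Set X} (hA : IsClosed A)
    (hB : IsClosed B) (h : ∀ a ∈ A, Disjoint (connectedComponent a) B) :
    ∃ C : Set X, IsClopen C ∧ A ⊆ C ∧ Disjoint C B := by
  let π : X → ConnectedComponents X := (↑)
  have hπ : IsClosedMap π := ConnectedComponents.continuous_coe.isClosedMap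
  have hAB : π '' A ⊆ (π '' B)ᶜ := by
    rintro _ ⟨a, ha, rfl⟩ ⟨b, hb, hba⟩
    exact disjoint_left.1 (h a ha) (ConnectedComponents.coe_eq_coe'.1 hba) hb
  obtain ⟨C, hC, hAC, hCB⟩ :=
    exists_clopen_of_closed_subset_open (hπ A hA) (hπ B hB).isOpen_compl hAB
  exact ⟨π ⁻¹' C, hC.preimage ConnectedComponents.continuous_coe, image_subset_iff.1 hAC,
    disjoint_left.2 fun x hxC hxB => hCB hxC (mem_image_of_mem π hxB)⟩

lemma exists_isSeparator_disjoint_of_no_continuum {A B K : Set X} (hA : IsClosed A)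
    (hB : IsClosed B) (hAB : Disjoint A B) (hK : IsClosed K)
    (h : ∀ C ⊆ K, IsCompact C → IsConnected C → (C ∩ A).Nonempty → ¬ (C ∩ B).Nonempty) :
    ∃ L : Set X, IsSeparator A B L ∧ Disjoint L K := by
  have : CompactSpace K := isCompact_iff_compactSpace.1 hK.isCompact
  obtain ⟨C, hC, hAC, hCB⟩ := exists_isClopen_of_disjoint_connectedComponent
    (hA.preimage (continuous_subtype_val (p := (· ∈ K))))
    (hB.preimage continuous_subtype_val) fun a ha => disjoint_left.2 fun b hb hbB =>
      h (Subtype.val '' connectedComponent a) (Subtype.coe_image_subset _ _)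
        (isClosed_connectedComponent.isCompact.image continuous_subtype_val)
        (isConnected_connectedComponent.image _ continuous_subtype_val.continuousOn)
        ⟨a, mem_image_of_mem _ mem_connectedComponent, ha⟩ ⟨b, mem_image_of_mem _ hb, hbB⟩
  have himage : ∀ F : Set K, IsClosed F → IsClosed (Subtype.val '' F) :=
    hK.isClosedEmbedding_subtypeVal.isClosedMap
  have hdisj : Disjoint (Subtype.val '' C ∪ A) (Subtype.val '' Cᶜ ∪ B) := by
    simp only [disjoint_union_left, disjoint_union_right]
    exact ⟨⟨(disjoint_image_iff Subtype.val_injective).2 disjoint_compl_right,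
      disjoint_image_right.2 (disjoint_compl_right.mono_left hAC)⟩,
      disjoint_image_left.2 hCB, hAB⟩
  obtain ⟨U, V, hU, hV, hCU, hCV, hUV⟩ :=
    normal_separation ((himage C hC.1).union hA) ((himage Cᶜ hC.compl.1).union hB) hdisj
  refine ⟨(U ∪ V)ᶜ, isSeparator_compl_union hU hV hUV (subset_union_right.trans hCU)
    (subset_union_right.trans hCV), disjoint_compl_left_iff_subset.2 fun x hx => ?_⟩
  by_cases hxC : (⟨x, hx⟩ : K) ∈ C
  · exact Or.inl (hCU (Or.inl ⟨⟨x, hx⟩, hxC, rfl⟩))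
  · exact Or.inr (hCV (Or.inl ⟨⟨x, hx⟩, hxC, rfl⟩))

lemma IsEssentialFamily.exists_continuum_subset_iInter {A B : Γ → Set X}
    (h : IsEssentialFamily A B) (i₀ : Γ) (hA : IsClosed (A i₀)) (hB : IsClosed (B i₀))
    (hAB : Disjoint (A i₀) (B i₀)) {L : Γ → Set X}
    (hL : ∀ i ≠ i₀, IsSeparator (A i) (B i) (L i)) :
    ∃ C ⊆ ⋂ i ≠ i₀, L i, IsCompact C ∧ IsConnected C ∧
      (C ∩ A i₀).Nonempty ∧ (C ∩ B i₀).Nonempty := by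
  classical
  by_contra! hno
  obtain ⟨M, hM, hML⟩ := exists_isSeparator_disjoint_of_no_continuum hA hB hAB
    (isClosed_iInter fun i => isClosed_iInter fun hi => (hL i hi).1) fun C hCL hC hC' hCA =>
      not_nonempty_iff_eq_empty.2 (hno C hCL hC hC' hCA)
  have hsep : ∀ i, IsSeparator (A i) (B i) (Function.update L i₀ M i) := by
    intro i
    obtain rfl | hi := eq_or_ne i i₀
    · simpa only [Function.update_self] using hM
    · simpa only [Function.update_of_ne hi] using hL i hi
  obtain ⟨x, hx⟩ := h _ hsep
  have hxM : x ∈ M := by simpa only [Function.update_self] using mem_iInter.1 hx i₀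
  refine disjoint_left.1 hML hxM (mem_iInter₂.2 fun i hi => ?_)
  simpa only [Function.update_of_ne hi] using mem_iInter.1 hx i

end Continua

theorem stronglyInfiniteDimensional_of_meets_every_continuum_between_faces_general {X : Type*}
    [TopologicalSpace X] [CompactSpace X] [T5Space X] {A B : ℕ → Set X}
    (hA : ∀ n, IsClosed (A n)) (hB : ∀ n, IsClosed (B n)) (hAB : ∀ n, Disjoint (A n) (B n))
    (hess : IsEssentialFamily A B) (S : Set X)
    (hS : ∀ C : Set X, IsCompact C → IsConnected C →
      (C ∩ A 0).Nonempty → (C ∩ B 0).Nonempty → (S ∩ C).Nonempty) :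
    StronglyInfiniteDimensional S := by
  choose A' hA' B' hB' hA'c hB'c hAB' using fun n =>
    exists_disjoint_isClosed_mem_nhdsSet (hA n) (hB n) (hAB n)
  refine ⟨fun n => Subtype.val ⁻¹' A' (n + 1), fun n => Subtype.val ⁻¹' B' (n + 1), fun n =>
    ⟨(hA'c _).preimage continuous_subtype_val, (hB'c _).preimage continuous_subtype_val,
      (hAB' _).preimage _⟩, fun L hL => ?_⟩
  choose M hM hML using fun n =>
    (hL n).exists_extension (hA _) (hB _) (hAB _) (hA' (n + 1)) (hB' (n + 1))
  have hM' : ∀ i ≠ 0, IsSeparator (A i) (B i) (M (i - 1)) := by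
    rintro (_ | n) hn
    exacts [absurd rfl hn, hM n]
  obtain ⟨C, hCM, hC, hC', hCA, hCB⟩ :=
    hess.exists_continuum_subset_iInter 0 (hA 0) (hB 0) (hAB 0) hM'
  obtain ⟨x, hxS, hxC⟩ := hS C hC hC' hCA hCB
  exact ⟨⟨x, hxS⟩, mem_iInter.2 fun n =>
    hML n (mem_iInter₂.1 (hCM hxC) (n + 1) n.succ_ne_zero)⟩

lemma isClosed_posFace (i : ℕ) : IsClosed (posFace i) :=
  isClosed_eq (continuous_subtype_val.comp (continuous_apply i)) continuous_const

lemma isClosed_negFace (i : ℕ) : IsClosed (negFace i) :=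
  isClosed_eq (continuous_subtype_val.comp (continuous_apply i)) continuous_const

lemma disjoint_posFace_negFace (i : ℕ) : Disjoint (posFace i) (negFace i) :=
  disjoint_left.2 fun x (hpos : (x i : ℝ) = 1) (hneg : (x i : ℝ) = -1) => by linarith

/-- If `S ⊆ Q` meets every continuum from the face `W_1^+` to the face
`W_1^-`, then `S` with the subspace topology is strongly infinite dimensional. -/
theorem stronglyInfiniteDimensional_of_meets_every_continuum_between_faces
    (S : Set HilbertCube)
    (hS : ∀ C : Set HilbertCube, IsCompact C → IsConnected C →
      (C ∩ posFace 0).Nonempty → (C ∩ negFace 0).Nonempty → (S ∩ C).Nonempty) :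
    StronglyInfiniteDimensional S := by
  exact stronglyInfiniteDimensional_of_meets_every_continuum_between_faces_general isClosed_posFace
    isClosed_negFace disjoint_posFace_negFace (isEssentialFamily_cubeFaces ℕ) S hS
end

section
/- For any two distinct points x, y of the Hilbert cube Q, the complement Q \ (W_1^- ∪ W_1^+) of the union of the two opposite faces W_1^- and W_1^+ is homeomorphic to the complement Q \ {x, y}. -/
open Set

/-!
The two faces are shrunk to `x` and to `y` by homeomorphisms supported near one face each, so it is
enough to find an open embedding of `{0 < h}`, for `h` a coordinate of the unit cube, onto `{x}ᶜ`
that is the identity on `{c ≤ h}` whenever `h x < c`. It is a limit of homeomorphisms `H n` of the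
cube such that `H (n + 1)` and `H n` agree outside a slab `{h < tₙ}` with `tₙ → 0`, and the images
of the slabs shrink to `x`.

A step of the iteration reduces to the square `[0, 1] × [0, 1]`: there a thin slab along the left
edge can be pressed into a horizontal or a vertical strip, by sliding the edge around the corners
of the square, so that the slab still covers a prescribed point. In the cube this is done with the
pairs formed by `h` and each of the finitely many coordinates that matter for a neighbourhood.
-/

open Function Filter Topology
open scoped unitInterval

lemma mem_iff_mem_of_eqOn_id_compl {X : Type*} {f : X → X} {S : Set X} (hf : Injective f)
    (h : EqOn f id Sᶜ) (p : X) : f p ∈ S ↔ p ∈ S := by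
  refine ⟨fun hp ↦ ?_, fun hp ↦ ?_⟩ <;> by_contra hn
  · exact hn ((show f p = p from h hn) ▸ hp)
  · exact hn ((hf (h hn)).symm ▸ hp)

/-! ### Limits of eventually stationary sequences of homeomorphisms -/

section StationaryLimit

variable {X Y : Type*}

lemma exists_forall_eqOn_compl {U : ℕ → Set X} {f : ℕ → X → Y} (hU : Antitone U)
    (hf : ∀ n, EqOn (f (n + 1)) (f n) (U n)ᶜ) : ∃ g : X → Y, ∀ n, EqOn g (f n) (U n)ᶜ := by
  classical
  have stationary : ∀ m n, m ≤ n → EqOn (f n) (f m) (U m)ᶜ := fun m n hmn ↦ by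
    induction n, hmn using Nat.le_induction with
    | base => exact eqOn_refl _ _
    | succ n hmn ih => exact ((hf n).mono (compl_subset_compl.2 (hU hmn))).trans ih
  refine ⟨fun q ↦ if h : ∃ n, q ∉ U n then f (Nat.find h) q else f 0 q, fun n q hq ↦ ?_⟩
  have h : ∃ n, q ∉ U n := ⟨n, hq⟩
  simp only [dif_pos h]
  exact (stationary _ n (Nat.find_min' h hq) (Nat.find_spec h)).symm

variable [TopologicalSpace X] [TopologicalSpace Y] {U : ℕ → Set X}

lemma antitone_of_closure_succ_subset (hU : ∀ n, closure (U (n + 1)) ⊆ U n) : Antitone U :=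
  antitone_nat_of_succ_le fun n ↦ subset_closure.trans (hU n)

lemma isClosed_iInter_of_closure_succ_subset (hU : ∀ n, closure (U (n + 1)) ⊆ U n) :
    IsClosed (⋂ n, U n) := by
  have : ⋂ n, U n = ⋂ n, closure (U (n + 1)) :=
    Subset.antisymm (subset_iInter fun n ↦ (iInter_subset U (n + 1)).trans subset_closure)
      (iInter_mono hU)
  exact this ▸ isClosed_iInter fun _ ↦ isClosed_closure

lemma continuousOn_compl_iInter {f : ℕ → X → Y} {g : X → Y}
    (hU : ∀ n, closure (U (n + 1)) ⊆ U n) (hf : ∀ n, Continuous (f n))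
    (hg : ∀ n, EqOn g (f n) (U n)ᶜ) : ContinuousOn g (⋂ n, U n)ᶜ := by
  intro q hq
  obtain ⟨n, hn⟩ : ∃ n, q ∉ U n := by simpa using hq
  have hev : f (n + 1) =ᶠ[𝓝 q] g := by
    filter_upwards [isClosed_closure.isOpen_compl.mem_nhds fun h ↦ hn (hU n h)] with p hp
    exact (hg (n + 1) fun h ↦ hp (subset_closure h)).symm
  exact ((hf (n + 1)).continuousAt.congr hev).continuousWithinAt

lemma image_eq_image_of_eqOn_compl {f g : X ≃ₜ Y} {S : Set X} (h : EqOn f g Sᶜ) :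
    f '' S = g '' S := by
  rw [← compl_inj_iff, ← image_compl_eq f.bijective, ← image_compl_eq g.bijective, h.image_eq]

lemma symm_eqOn_compl_image {f g : X ≃ₜ Y} {S : Set X} (h : EqOn f g Sᶜ) :
    EqOn f.symm g.symm (g '' S)ᶜ := by
  intro p hp
  have hq : g.symm p ∉ S := fun hS ↦ hp ⟨_, hS, g.apply_symm_apply p⟩
  rw [Homeomorph.symm_apply_eq, h hq, g.apply_symm_apply]

theorem exists_openPartialHomeomorph_compl_iInter {H : ℕ → X ≃ₜ Y}
    (hU : ∀ n, closure (U (n + 1)) ⊆ U n) (hH : ∀ n, EqOn (H (n + 1)) (H n) (U n)ᶜ) :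
    ∃ e : OpenPartialHomeomorph X Y, e.source = (⋂ n, U n)ᶜ ∧
      e.target = (⋂ n, H n '' U n)ᶜ ∧ ∀ n, EqOn e (H n) (U n)ᶜ := by
  have hW : ∀ n, closure (H (n + 1) '' U (n + 1)) ⊆ H n '' U n := fun n ↦ by
    rw [← (H (n + 1)).image_closure, ← image_eq_image_of_eqOn_compl (hH n)]
    exact image_mono (hU n)
  obtain ⟨g, hg⟩ := exists_forall_eqOn_compl (f := fun n ↦ H n)
    (antitone_of_closure_succ_subset hU) hH
  obtain ⟨g', hg'⟩ := exists_forall_eqOn_compl (f := fun n ↦ (H n).symm)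
    (antitone_of_closure_succ_subset hW) fun n ↦ symm_eqOn_compl_image (hH n)
  have image_iff : ∀ n q, H n q ∈ H n '' U n ↔ q ∈ U n := fun n q ↦
    (H n).injective.mem_set_image
  have forward : ∀ q ∈ (⋂ n, U n)ᶜ, g q ∈ (⋂ n, H n '' U n)ᶜ ∧ g' (g q) = q := fun q hq ↦ by
    obtain ⟨n, hn⟩ : ∃ n, q ∉ U n := by simpa using hq
    have hn' : H n q ∉ H n '' U n := (image_iff n q).not.2 hn
    rw [hg n hn]
    exact ⟨fun h ↦ hn' (mem_iInter.1 h n), by rw [hg' n hn', (H n).symm_apply_apply]⟩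
  have backward : ∀ p ∈ (⋂ n, H n '' U n)ᶜ, g' p ∈ (⋂ n, U n)ᶜ ∧ g (g' p) = p := fun p hp ↦ by
    obtain ⟨n, hn⟩ : ∃ n, p ∉ H n '' U n := by
      simpa only [mem_compl_iff, mem_iInter, not_forall] using hp
    have hn' : (H n).symm p ∉ U n := by rwa [← image_iff, (H n).apply_symm_apply]
    rw [hg' n hn]
    exact ⟨fun h ↦ hn' (mem_iInter.1 h n), by rw [hg n hn', (H n).apply_symm_apply]⟩
  exact ⟨{  toFun := g
            invFun := g'
            source := (⋂ n, U n)ᶜ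
            target := (⋂ n, H n '' U n)ᶜ
            map_source' := fun q hq ↦ (forward q hq).1
            map_target' := fun p hp ↦ (backward p hp).1
            left_inv' := fun q hq ↦ (forward q hq).2
            right_inv' := fun p hp ↦ (backward p hp).2
            open_source := (isClosed_iInter_of_closure_succ_subset hU).isOpen_compl
            open_target := (isClosed_iInter_of_closure_succ_subset hW).isOpen_compl
            continuousOn_toFun := continuousOn_compl_iInter hU (fun n ↦ (H n).continuous) hg
            continuousOn_invFun :=
              continuousOn_compl_iInter hW (fun n ↦ (H n).symm.continuous) hg' }, rfl, rfl, hg⟩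

end StationaryLimit

/-! ### Captures -/

/-- A homeomorphism `K` of a space with height function `h` is a capture when it is supported in
the slab `{h < T}` and presses a thinner slab `{h < t}` into `O` while keeping `z` in the image of
that slab. The bound `t ≤ T / 2` makes the levels of iterated captures tend to `0`. -/
structure IsCapture {X : Type*} [TopologicalSpace X] (h : X → ℝ) (T t : ℝ) (z : X) (O : Set X)
    (K : X ≃ₜ X) : Prop where
  pos : 0 < t
  le_half : t ≤ T / 2
  eqOn : EqOn K id {q | T ≤ h q}
  height_symm_lt : h (K.symm z) < t
  mapsTo : MapsTo K {q | h q < t} O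

/-- Points below level `T ≤ 1` of the height function `h` can be captured into arbitrarily small
neighbourhoods. -/
def HasCaptures {X : Type*} [TopologicalSpace X] (h : X → ℝ) : Prop :=
  ∀ ⦃T : ℝ⦄, 0 < T → T ≤ 1 → ∀ ⦃z : X⦄, h z < T → ∀ O ∈ 𝓝 z, ∃ t K, IsCapture h T t z O K

section Capture

variable {X Y : Type*} [TopologicalSpace X] [TopologicalSpace Y] {h : X → ℝ} {T t t' : ℝ} {z : X}
  {O O' : Set X} {K K' : X ≃ₜ X}

lemma IsCapture.mono (hK : IsCapture h T t z O K) (hO : O ⊆ O') : IsCapture h T t z O' K :=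
  { hK with mapsTo := hK.mapsTo.mono_right hO }

lemma IsCapture.lt (hK : IsCapture h T t z O K) : t < T := by
  linarith [hK.pos, hK.le_half]

lemma IsCapture.conj (φ : Y ≃ₜ X) {z : Y} (hK : IsCapture h T t (φ z) O K) :
    IsCapture (h ∘ φ) T t z (φ ⁻¹' O) ((φ.trans K).trans φ.symm) where
  pos := hK.pos
  le_half := hK.le_half
  eqOn q hq := by
    have hKq : K (φ q) = φ q := hK.eqOn hq
    simp [hKq]
  height_symm_lt := by simpa using hK.height_symm_lt
  mapsTo q hq := by simpa using hK.mapsTo hq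

lemma IsCapture.trans (hK : IsCapture h T t z O K) (hK' : IsCapture h t t' (K.symm z) O' K') :
    IsCapture h T t' z (O ∩ K.symm ⁻¹' O') (K'.trans K) where
  pos := hK'.pos
  le_half := by linarith [hK.le_half, hK'.le_half, hK.pos]
  eqOn q hq := by
    have hK'q : K' q = q := hK'.eqOn (hK.lt.le.trans hq)
    exact (congrArg K hK'q).trans (hK.eqOn hq)
  height_symm_lt := hK'.height_symm_lt
  mapsTo q hq := by
    have hslab : h (K' q) < t :=
      (mem_iff_mem_of_eqOn_id_compl (S := {q | h q < t}) K'.injective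
        (hK'.eqOn.mono fun p (hp : ¬h p < t) ↦ not_lt.1 hp) q).2 (lt_trans hq hK'.lt)
    exact ⟨hK.mapsTo hslab, by simpa using hK'.mapsTo hq⟩

lemma HasCaptures.comp_homeomorph (hh : HasCaptures h) (φ : Y ≃ₜ X) : HasCaptures (h ∘ φ) := by
  intro T hT hT₁ z hz O hO
  obtain ⟨t, K, hK⟩ := hh hT hT₁ hz (φ.symm ⁻¹' O)
    (φ.symm.continuous.continuousAt.preimage_mem_nhds (by simpa using hO))
  exact ⟨t, _, (hK.conj φ).mono (by simp [← preimage_comp])⟩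

/-- A stage of the iterated capture of `x`: the homeomorphism built so far and the level of the
slab that contains the preimage of `x`. -/
structure CaptureStage (h : X → ℝ) (x : X) where
  homeo : X ≃ₜ X
  level : ℝ
  pos : 0 < level
  le_one : level ≤ 1
  height_symm_lt : h (homeo.symm x) < level

/-- The slab of points below the level of a stage. -/
def CaptureStage.slab {x : X} (S : CaptureStage h x) : Set X := {q | h q < S.level}

/-- `S'` refines `S` into `V`: it changes the homeomorphism of `S` on its slab only, at least halves
the level, and maps the new slab into `V`. -/
structure CaptureStage.Refines {x : X} (S S' : CaptureStage h x) (V : Set X) : Prop where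
  level_le : S'.level ≤ S.level / 2
  eqOn : EqOn S'.homeo S.homeo S.slabᶜ
  mapsTo : MapsTo S'.homeo S'.slab V

lemma CaptureStage.exists_refines {x : X} (hh : HasCaptures h) (S : CaptureStage h x) {V : Set X}
    (hV : V ∈ 𝓝 x) : ∃ S' : CaptureStage h x, S.Refines S' V := by
  obtain ⟨t, K, hK⟩ := hh S.pos S.le_one S.height_symm_lt (S.homeo ⁻¹' V)
    (S.homeo.continuous.continuousAt.preimage_mem_nhds (by simpa using hV))
  exact ⟨⟨K.trans S.homeo, t, hK.pos, hK.lt.le.trans S.le_one, hK.height_symm_lt⟩, hK.le_half,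
    fun q (hq : ¬h q < S.level) ↦ congrArg S.homeo (hK.eqOn (not_lt.1 hq)), hK.mapsTo⟩

lemma CaptureStage.Refines.closure_slab_subset {x : X} {S S' : CaptureStage h x} {V : Set X}
    (hS : S.Refines S' V) (hc : Continuous h) : closure S'.slab ⊆ S.slab := by
  have hlt : S'.level < S.level := by linarith [hS.level_le, S.pos]
  exact (closure_lt_subset_le hc continuous_const).trans fun q hq ↦ lt_of_le_of_lt hq hlt

lemma iInter_slab {x : X} {S : ℕ → CaptureStage h x}
    (hS : ∀ n, (S (n + 1)).level ≤ (S n).level / 2) : ⋂ n, (S n).slab = {q | h q ≤ 0} := by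
  have hlevel : ∀ n, (S n).level ≤ (1 / 2) ^ n := fun n ↦ by
    induction n with
    | zero => simpa using (S 0).le_one
    | succ n ih => rw [pow_succ]; linarith [hS n]
  refine Subset.antisymm (fun q hq ↦ ?_) fun q hq ↦ mem_iInter.2 fun n ↦ hq.trans_lt (S n).pos
  refine ge_of_tendsto' (tendsto_pow_atTop_nhds_zero_of_lt_one (by norm_num)
    (by norm_num : (1 / 2 : ℝ) < 1)) fun n ↦ ?_
  exact (mem_iInter.1 hq n).le.trans (hlevel n)

lemma iInter_image_slab [T1Space X] {x : X} {S : ℕ → CaptureStage h x} {V : ℕ → Set X}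
    (hV : (𝓝 x).HasAntitoneBasis V) (hS : ∀ n, MapsTo (S (n + 1)).homeo (S (n + 1)).slab (V n)) :
    ⋂ n, (S n).homeo '' (S n).slab = {x} := by
  refine Subset.antisymm (fun p hp ↦ ?_) ?_
  · rw [← biInter_basis_nhds hV.toHasBasis]
    exact mem_iInter₂.2 fun n _ ↦ (hS n).image_subset (mem_iInter.1 hp (n + 1))
  · exact singleton_subset_iff.2 (mem_iInter.2 fun n ↦
      ⟨_, (S n).height_symm_lt, (S n).homeo.apply_symm_apply x⟩)

theorem HasCaptures.exists_openPartialHomeomorph [T1Space X] [FirstCountableTopology X]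
    (hh : HasCaptures h) (hc : Continuous h) {x : X} {c : ℝ} (hc₀ : 0 < c) (hc₁ : c ≤ 1)
    (hx : h x < c) :
    ∃ e : OpenPartialHomeomorph X X, e.source = {q | 0 < h q} ∧ e.target = {x}ᶜ ∧
      EqOn e id {q | c ≤ h q} := by
  obtain ⟨V, hV⟩ := (𝓝 x).exists_antitone_basis
  choose next hnext using fun (n : ℕ) (S : CaptureStage h x) ↦ S.exists_refines hh (hV.mem n)
  let S : ℕ → CaptureStage h x := fun n ↦ n.rec ⟨.refl X, c, hc₀, hc₁, hx⟩ next
  have hS : ∀ n, (S n).Refines (S (n + 1)) (V n) := fun n ↦ hnext n (S n)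
  obtain ⟨e, hsource, htarget, he⟩ := exists_openPartialHomeomorph_compl_iInter
    (H := fun n ↦ (S n).homeo) (fun n ↦ (hS n).closure_slab_subset hc) fun n ↦ (hS n).eqOn
  refine ⟨e, ?_, ?_, fun q (hq : c ≤ h q) ↦ he 0 (show ¬h q < c from not_lt.2 hq)⟩
  · rw [hsource, iInter_slab fun n ↦ (hS n).level_le]
    ext q
    simp
  · rw [htarget, iInter_image_slab hV fun n ↦ (hS n).mapsTo]

end Capture

/-! ### Combining two captures -/

lemma isImage_self_of_eqOn_id {X : Type*} [TopologicalSpace X] {e : OpenPartialHomeomorph X X}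
    {B : Set X} (hB : B ⊆ e.source) (he : EqOn e id B) : e.IsImage B B := by
  refine fun q hq ↦ ⟨fun h ↦ ?_, fun h ↦ (he h).symm ▸ h⟩
  exact e.injOn (hB h) hq (he h) ▸ h

theorem nonempty_homeomorph_compl_pair {X : Type*} [TopologicalSpace X] [T1Space X]
    [FirstCountableTopology X] {h h' : X → ℝ} (hh : HasCaptures h) (hh' : HasCaptures h')
    (hc : Continuous h) (hc' : Continuous h') {x y : X} {c c' : ℝ} (hc₀ : 0 < c) (hc₁ : c ≤ 1)
    (hc₀' : 0 < c') (hc₁' : c' ≤ 1) (hx : h x < c) (hy : h' y < c')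
    (hcover : ∀ q, c ≤ h q ∨ c' ≤ h' q) :
    Nonempty ({q | 0 < h q ∧ 0 < h' q} ≃ₜ ({x, y}ᶜ : Set X)) := by
  obtain ⟨e, hes, het, he⟩ := hh.exists_openPartialHomeomorph hc hc₀ hc₁ hx
  obtain ⟨f, hfs, hft, hf⟩ := hh'.exists_openPartialHomeomorph hc' hc₀' hc₁' hy
  have hlow : ∀ q, h' q ≤ 0 → c ≤ h q := fun q hq ↦
    (hcover q).resolve_right (hq.trans_lt hc₀').not_ge
  have he_image : e.IsImage {q | h' q ≤ 0} {q | h' q ≤ 0} :=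
    isImage_self_of_eqOn_id (fun q hq ↦ hes ▸ hc₀.trans_le (hlow q hq)) (he.mono hlow)
  have hx' : c' ≤ h' x := (hcover x).resolve_left hx.not_ge
  have hf_image : f.IsImage {x} {x} :=
    isImage_self_of_eqOn_id (singleton_subset_iff.2 (hfs ▸ hc₀'.trans_le hx'))
      (hf.mono (singleton_subset_iff.2 hx'))
  have hsource : (e.trans f).source = {q | 0 < h q ∧ 0 < h' q} := by
    have hfs' : f.source = {q | h' q ≤ 0}ᶜ := by ext; simp [hfs]
    rw [OpenPartialHomeomorph.trans_source, hfs', he_image.compl.preimage_eq, hes]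
    ext
    simp
  have htarget : (e.trans f).target = {x, y}ᶜ := by
    rw [OpenPartialHomeomorph.trans_target, het, hf_image.compl.symm_preimage_eq, hft]
    ext
    simp [and_comm]
  exact ⟨((Homeomorph.setCongr hsource).symm.trans (e.trans f).toHomeomorphSourceTarget).trans
    (Homeomorph.setCongr htarget)⟩

/-! ### Shears -/

section Shear

lemma exists_homeomorph_prod_of_strictMono {X α : Type*} [TopologicalSpace X] [LinearOrder α]
    [TopologicalSpace α] [OrderTopology α] {g : X → α → α} (hc : Continuous (uncurry g))
    (hmono : ∀ x, StrictMono (g x)) (hsurj : ∀ x, Surjective (g x)) :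
    ∃ k : X × α ≃ₜ X × α, ∀ p, k p = (p.1, g p.1 p.2) := by
  choose f hf using hsurj
  have hfc : Continuous (uncurry f) := by
    refine OrderTopology.continuous_iff.2 fun a ↦ ?_
    have hga : Continuous fun p : X × α ↦ g p.1 a :=
      hc.comp (continuous_fst.prodMk continuous_const)
    have hlower : uncurry f ⁻¹' Ioi a = {p | g p.1 a < p.2} := by
      ext p
      rw [mem_preimage, uncurry, mem_Ioi, ← (hmono p.1).lt_iff_lt, hf, mem_ofPred_eq]
    have hupper : uncurry f ⁻¹' Iio a = {p | p.2 < g p.1 a} := by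
      ext p
      rw [mem_preimage, uncurry, mem_Iio, ← (hmono p.1).lt_iff_lt, hf, mem_ofPred_eq]
    exact ⟨hlower ▸ isOpen_lt hga continuous_snd, hupper ▸ isOpen_lt continuous_snd hga⟩
  exact ⟨{  toFun := fun p ↦ (p.1, g p.1 p.2)
            invFun := fun p ↦ (p.1, f p.1 p.2)
            left_inv := fun p ↦ Prod.ext rfl ((hmono p.1).injective (hf _ _))
            right_inv := fun p ↦ Prod.ext rfl (hf _ _)
            continuous_toFun := continuous_fst.prodMk hc
            continuous_invFun := continuous_fst.prodMk hfc }, fun _ ↦ rfl⟩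

lemma exists_homeomorph_restrict {X Y : Type*} [TopologicalSpace X] [TopologicalSpace Y]
    {φ : X → Y} (hφ : IsEmbedding φ) (k : Y ≃ₜ Y)
    (hk : ∀ y, k y ∈ range φ ↔ y ∈ range φ) : ∃ K : X ≃ₜ X, ∀ x, φ (K x) = k (φ x) := by
  refine ⟨(hφ.toHomeomorph.trans (k.subtype fun y ↦ (hk y).symm)).trans hφ.toHomeomorph.symm,
    fun x ↦ ?_⟩
  exact congrArg Subtype.val (hφ.toHomeomorph.apply_symm_apply
    (k.subtype (fun y ↦ (hk y).symm) (hφ.toHomeomorph x)))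

/-- The tent function supported on `[l, r]` with apex `1` at `u`. -/
noncomputable def tent (l u r s : ℝ) : ℝ := max 0 (min ((s - l) / (u - l)) ((r - s) / (r - u)))

variable {l u v r : ℝ}

lemma continuous_tent : Continuous (tent l u r) := by
  unfold tent
  fun_prop

lemma tent_apex (hl : l < u) (hr : u < r) : tent l u r u = 1 := by
  simp [tent, div_self (sub_pos.2 hl).ne', div_self (sub_pos.2 hr).ne']

lemma tent_eq_zero (hl : l < u) (hr : u < r) {s : ℝ} (hs : s ∉ Ioo l r) : tent l u r s = 0 := by
  refine max_eq_left ?_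
  rcases le_or_gt s l with h | h
  · exact min_le_of_left_le (div_nonpos_of_nonpos_of_nonneg (by linarith) (by linarith))
  · have hrs : r ≤ s := not_lt.1 fun h' ↦ hs ⟨h, h'⟩
    exact min_le_of_right_le (div_nonpos_of_nonpos_of_nonneg (by linarith) (by linarith))

lemma tent_le_tent_add_of_le (hl : l < u) (hr : u < r) {a b : ℝ} (hab : a ≤ b) :
    tent l u r b ≤ tent l u r a + (b - a) / (u - l) := by
  have hslope : 0 ≤ (b - a) / (u - l) := div_nonneg (by linarith) (by linarith)
  have hleft : (b - l) / (u - l) = (a - l) / (u - l) + (b - a) / (u - l) := by ring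
  have hright : (r - b) / (r - u) ≤ (r - a) / (r - u) :=
    div_le_div_of_nonneg_right (by linarith) (by linarith)
  rw [tent, tent, max_add, min_add, hleft]
  exact max_le_max (by linarith) (min_le_min_left _ (by linarith))

lemma tent_neg (s : ℝ) : tent (-r) (-u) (-l) (-s) = tent l u r s := by
  rw [tent, tent, min_comm]
  congr 3 <;> ring

lemma strictMono_add_mul_tent (hl : l < u) (hr : u < r) {c : ℝ} (hcl : l < u + c)
    (hcr : u + c < r) : StrictMono fun s ↦ s + c * tent l u r s := by
  intro a b hab
  have hrise := tent_le_tent_add_of_le hl hr hab.le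
  have hfall := tent_le_tent_add_of_le (neg_lt_neg hr) (neg_lt_neg hl) (neg_le_neg hab.le)
  rw [tent_neg, tent_neg] at hfall
  have hsmall : ∀ d e, d < e → 0 < e → d * ((b - a) / e) < b - a := fun d e hde he ↦ by
    rw [mul_div_assoc', div_lt_iff₀ he, mul_comm]
    exact mul_lt_mul_of_pos_left hde (sub_pos.2 hab)
  have hdown := hsmall (-c) (u - l) (by linarith) (by linarith)
  have hup := hsmall c (-u - -r) (by linarith) (by linarith)
  rw [show -a - -b = b - a by ring] at hfall
  rcases le_total 0 c with hc | hc
  · nlinarith [mul_le_mul_of_nonneg_left hfall hc]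
  · nlinarith [mul_le_mul_of_nonneg_left hrise (neg_nonneg.2 hc)]

lemma surjective_add_mul_tent (hl : l < u) (hr : u < r) (c : ℝ) :
    Surjective fun s ↦ s + c * tent l u r s := by
  refine (continuous_id.add (continuous_tent.const_mul c)).surjective ?_ ?_
  · refine tendsto_id.congr' ?_
    filter_upwards [eventually_ge_atTop r] with s hs
    simp [tent_eq_zero hl hr fun h ↦ hs.not_gt h.2]
  · refine tendsto_id.congr' ?_
    filter_upwards [eventually_le_atBot l] with s hs
    simp [tent_eq_zero hl hr fun h ↦ hs.not_gt h.1]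

variable {X : Type*} [TopologicalSpace X] [NormalSpace X] {A B : Set X}

theorem exists_shear (hA : IsClosed A) (hB : IsClosed B) (hAB : Disjoint A B) (hlu : l < u)
    (hur : u < r) (hlv : l < v) (hvr : v < r) :
    ∃ (k : X × ℝ ≃ₜ X × ℝ) (ψ : ℝ → ℝ), StrictMono ψ ∧ ψ u = v ∧ (∀ p, (k p).1 = p.1) ∧
      (∀ x ∈ A, ∀ s, k (x, s) = (x, ψ s)) ∧ EqOn k id {p | p.1 ∉ B ∧ p.2 ∈ Ioo l r}ᶜ := by
  obtain ⟨f, hfB, hfA, hf⟩ := exists_continuous_zero_one_of_isClosed hB hA hAB.symm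
  have hdisp : ∀ x, u + f x * (v - u) ∈ Ioo l r := fun x ↦
    (convex_Ioo l r).add_smul_sub_mem ⟨hlu, hur⟩ ⟨hlv, hvr⟩ (hf x)
  obtain ⟨k, hk⟩ := exists_homeomorph_prod_of_strictMono
    (g := fun x s ↦ s + f x * (v - u) * tent l u r s)
    (by have := continuous_tent (l := l) (u := u) (r := r); unfold uncurry; fun_prop)
    (fun x ↦ strictMono_add_mul_tent hlu hur (hdisp x).1 (hdisp x).2)
    fun x ↦ surjective_add_mul_tent hlu hur _
  refine ⟨k, fun s ↦ s + (v - u) * tent l u r s,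
    strictMono_add_mul_tent hlu hur (by linarith) (by linarith), by simp [tent_apex hlu hur],
    fun p ↦ by rw [hk], fun x hx s ↦ by simp [hk, hfA hx], fun p hp ↦ ?_⟩
  rcases Classical.em (p.1 ∈ B) with hpB | hpB
  · simp [hk, hfB hpB]
  · simp [hk, tent_eq_zero hlu hur fun h ↦ hp ⟨hpB, h⟩]

theorem exists_shear_unitInterval (hA : IsClosed A) (hB : IsClosed B) (hAB : Disjoint A B)
    {u v : I} (hu₀ : 0 < u) (hu : u < r) (hv₀ : 0 < v) (hv : v < r) (hr : r ≤ 1) :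
    ∃ k : X × I ≃ₜ X × I, (∀ p, (k p).1 = p.1) ∧ (∀ x ∈ A, k (x, u) = (x, v)) ∧
      EqOn k id {p | p.1 ∈ B ∨ r ≤ p.2} := by
  obtain ⟨k, ψ, -, hψ, hk₁, hkA, hk⟩ := exists_shear hA hB hAB hu₀ hu hv₀ hv
  have hrange : range (Prod.map id (↑) : X × I → X × ℝ) = {p | p.2 ∈ Icc 0 1} := by
    rw [range_prodMap, range_id, Subtype.range_coe]
    ext
    simp
  have hpres : ∀ p, (k p).2 ∈ Icc 0 1 ↔ p.2 ∈ Icc 0 1 := fun p ↦ by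
    by_cases hp : p.1 ∉ B ∧ p.2 ∈ Ioo 0 r
    · obtain ⟨-, hkp⟩ := (mem_iff_mem_of_eqOn_id_compl k.injective hk p).2 hp
      exact iff_of_true ⟨hkp.1.le, hkp.2.le.trans hr⟩ ⟨hp.2.1.le, hp.2.2.le.trans hr⟩
    · rw [hk hp, id]
  have hemb := IsEmbedding.id.prodMap IsEmbedding.subtypeVal (X := X) (Z := I)
  obtain ⟨K, hK⟩ := exists_homeomorph_restrict hemb k fun p ↦ by
    rw [hrange]
    exact hpres p
  refine ⟨K, fun p ↦ ?_, fun x hx ↦ hemb.injective ?_, fun p hp ↦ hemb.injective ?_⟩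
  · exact (congrArg Prod.fst (hK p)).trans (hk₁ _)
  · simp only [hK, Prod.map_apply, id, hkA x hx, hψ]
  · refine (hK p).trans (hk ?_)
    rintro ⟨hpB, -, hpr⟩
    exact hp.elim hpB hpr.not_ge

theorem exists_push (hA : IsClosed A) (hB : IsClosed B) (hAB : Disjoint A B) {v : I}
    (hv : v < r) (hr : r ≤ 1) {N : Set I} (hN : N ∈ 𝓝 0) :
    ∃ u ∈ N, ∃ k : X × I ≃ₜ X × I, (∀ p, (k p).1 = p.1) ∧ (∀ x ∈ A, k (x, u) = (x, v)) ∧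
      EqOn k id {p | p.1 ∈ B ∨ r ≤ p.2} := by
  rcases eq_or_ne v 0 with rfl | hv₀
  · exact ⟨0, mem_of_mem_nhds hN, .refl _, fun _ ↦ rfl, fun _ _ ↦ rfl, fun _ _ ↦ rfl⟩
  have hv₀ : 0 < v := unitInterval.pos_iff_ne_zero.2 hv₀
  obtain ⟨w, hw, hwN⟩ := exists_Ico_subset_of_mem_nhds hN ⟨v, hv₀⟩
  obtain ⟨u, hu₀, hu⟩ := exists_between (lt_min hw hv₀)
  obtain ⟨huw, huv⟩ := lt_min_iff.1 hu
  exact ⟨u, hwN ⟨hu₀.le, huw⟩, exists_shear_unitInterval hA hB hAB hu₀ (hv.trans' huv) hv₀ hv hr⟩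

end Shear

/-! ### Captures in the square -/

section Square

/-- Coordinates of the plane adapted to the corner of the first quadrant: the quadrant becomes the
half plane `0 ≤ t`, and its boundary the line `t = 0`. -/
def cornerCoordinates : ℝ × ℝ ≃ₜ ℝ × ℝ where
  toFun p := (min p.1 p.2, p.1 - p.2)
  invFun p := (p.1 + max p.2 0, p.1 + max (-p.2) 0)
  left_inv p := by rcases le_total p.1 p.2 with h | h <;> ext <;> simp [h]
  right_inv p := by rcases le_total 0 p.2 with h | h <;> ext <;> simp [h]
  continuous_toFun := by fun_prop
  continuous_invFun := by fun_prop

/-- The boundary of the first quadrant, running down the vertical axis for `s ≤ 0` and then along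
the horizontal axis for `0 ≤ s`. -/
noncomputable def cornerArc (s : ℝ) : ℝ × ℝ := cornerCoordinates.symm (0, s)

lemma cornerArc_eq (s : ℝ) : cornerArc s = (max s 0, max (-s) 0) := by
  simp [cornerArc, cornerCoordinates]

lemma cornerArc_of_nonneg {s : ℝ} (hs : 0 ≤ s) : cornerArc s = (s, 0) := by
  simp [cornerArc_eq, hs]

lemma cornerArc_of_nonpos {s : ℝ} (hs : s ≤ 0) : cornerArc s = (0, -s) := by
  simp [cornerArc_eq, hs]

lemma fst_lt_and_snd_lt_of_cornerCoordinates {δ S T : ℝ} {p : ℝ × ℝ}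
    (hδ : (cornerCoordinates p).1 < δ) (hp : (cornerCoordinates p).2 ∈ Ioo (-S + δ) (T - δ))
    (hS : δ < S) (hT : δ < T) : p.1 < T ∧ p.2 < S := by
  obtain ⟨hl, hr⟩ : -S + δ < p.1 - p.2 ∧ p.1 - p.2 < T - δ := hp
  rcases min_lt_iff.1 hδ with h | h <;> constructor <;> linarith

lemma exists_planar_slide {T u v : ℝ} (hT₀ : 0 < T) (hT₁ : T ≤ 1) (hu : u ∈ Ioo (-1) T)
    (hv : v ∈ Ioo (-1) T) :
    ∃ (k : ℝ × ℝ ≃ₜ ℝ × ℝ) (ψ : ℝ → ℝ), StrictMono ψ ∧ ψ u = v ∧ ψ (-1) = -1 ∧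
      (∀ s, k (cornerArc s) = cornerArc (ψ s)) ∧
      (∀ p : ℝ × ℝ, T ≤ p.1 → k p = p) ∧
      ∀ p, k p ∈ Icc (0 : ℝ) 1 ×ˢ Icc (0 : ℝ) 1 ↔ p ∈ Icc (0 : ℝ) 1 ×ˢ Icc (0 : ℝ) 1 := by
  obtain ⟨δ, hδ₀, hδ⟩ : ∃ δ, 0 < δ ∧
      δ < min T (min (min (u + 1) (v + 1)) (min (T - u) (T - v))) :=
    exists_between (by simp [hT₀, hu.2, hv.2, neg_lt_iff_pos_add.1 hu.1, neg_lt_iff_pos_add.1 hv.1])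
  simp only [lt_min_iff] at hδ
  obtain ⟨hδT, ⟨hlu, hlv⟩, hur, hvr⟩ := hδ
  obtain ⟨k, ψ, hmono, hψ, hk₁, hk₀, hk⟩ := exists_shear (l := -1 + δ) (r := T - δ)
    (A := Iic (0 : ℝ)) isClosed_Iic isClosed_Ici (Iic_disjoint_Ici.2 hδ₀.not_ge)
    (by linarith : _ < u) (by linarith) (by linarith : _ < v) (by linarith)
  have hψ' : ψ (-1) = -1 := by
    have := (hk₀ 0 self_mem_Iic (-1)).symm.trans (hk (by simp [hδ₀.le]))
    exact (Prod.ext_iff.1 this).2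
  let K := cornerCoordinates.trans (k.trans cornerCoordinates.symm)
  let D : Set (ℝ × ℝ) := cornerCoordinates ⁻¹' {p | p.1 ∉ Ici δ ∧ p.2 ∈ Ioo (-1 + δ) (T - δ)}
  have hK : EqOn K id Dᶜ := fun p hp ↦
    (congrArg cornerCoordinates.symm (hk hp)).trans (cornerCoordinates.symm_apply_apply p)
  have hD : ∀ p ∈ D, p.1 < T ∧ p.2 < 1 := fun p hp ↦
    fst_lt_and_snd_lt_of_cornerCoordinates (not_le.1 hp.1) hp.2 (hδT.trans_le hT₁) hδT
  have hDsq : ∀ p ∈ D, p ∈ Icc (0 : ℝ) 1 ×ˢ Icc (0 : ℝ) 1 ↔ 0 ≤ (cornerCoordinates p).1 :=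
    fun p hp ↦ by
      have h₁ : p.1 ≤ 1 := (hD p hp).1.le.trans hT₁
      have h₂ : p.2 ≤ 1 := (hD p hp).2.le
      simp only [mem_prod, mem_Icc, h₁, h₂, and_true]
      exact le_min_iff.symm
  refine ⟨K, ψ, hmono, hψ, hψ', fun s ↦ ?_, fun p hp ↦ hK fun hpD ↦ hp.not_gt (hD p hpD).1,
    fun p ↦ ?_⟩
  · simp [K, cornerArc, hk₀]
  · by_cases hp : p ∈ D
    · rw [hDsq p hp, hDsq _ ((mem_iff_mem_of_eqOn_id_compl K.injective hK p).2 hp)]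
      simp [K, hk₁]
    · rw [hK hp, id]

lemma exists_slide {T u v : ℝ} (hT₀ : 0 < T) (hT₁ : T ≤ 1) (hu : u ∈ Ioo (-1) T)
    (hv : v ∈ Ioo (-1) T) :
    ∃ (K : I × I ≃ₜ I × I) (ψ : ℝ → ℝ), StrictMono ψ ∧ ψ u = v ∧ ψ (-1) = -1 ∧
      EqOn K id {p | T ≤ p.1} ∧
      ∀ p s, Prod.map (↑) (↑) p = cornerArc s → Prod.map (↑) (↑) (K p) = cornerArc (ψ s) := by
  obtain ⟨k, ψ, hmono, hψ, hψ', hkarc, hkT, hksq⟩ := exists_planar_slide hT₀ hT₁ hu hv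
  have hemb := IsEmbedding.subtypeVal.prodMap IsEmbedding.subtypeVal (X := I) (Z := I)
  obtain ⟨K, hK⟩ := exists_homeomorph_restrict hemb k fun p ↦ by
    rw [range_prodMap, Subtype.range_coe]
    exact hksq p
  refine ⟨K, ψ, hmono, hψ, hψ', fun p hp ↦ hemb.injective ((hK p).trans (hkT _ hp)),
    fun p s hp ↦ ?_⟩
  exact (hK p).trans ((congrArg k hp).trans (hkarc s))

/-- The reflection of the unit square exchanging its bottom and top edges. -/
def reflectSnd : I × I ≃ₜ I × I := (Homeomorph.refl I).prodCongr unitInterval.symmHomeomorph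

lemma reflectSnd_apply (p : I × I) : reflectSnd p = (p.1, σ p.2) := rfl

lemma reflectSnd_reflectSnd (p : I × I) : reflectSnd (reflectSnd p) = p := by
  simp [reflectSnd_apply]

variable {T : ℝ}

lemma exists_compress_left_upward (hT₀ : 0 < T) (hT₁ : T ≤ 1) {c : I} (hc : c < 1) :
    ∃ K : I × I ≃ₜ I × I, EqOn K id {p | T ≤ p.1} ∧ K (0, 1) = (0, 1) ∧
      ∀ y, ∃ y', c ≤ y' ∧ K (0, y) = (0, y') := by
  have hc₁ : (c : ℝ) < 1 := hc
  obtain ⟨K, ψ, hmono, hψ, hψ', hKT, hK⟩ := exists_slide (u := 0) (v := -c) hT₀ hT₁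
    ⟨by norm_num, hT₀⟩ ⟨by linarith, by linarith [c.2.1]⟩
  have hψ_le : ∀ y : I, ψ (-y) ≤ -c := fun y ↦ hψ ▸ hmono.monotone (neg_nonpos.2 y.2.1)
  have hedge : ∀ y : I, Prod.map (↑) (↑) (K (0, y)) = ((0 : ℝ), -ψ (-y)) := fun y ↦ by
    rw [← cornerArc_of_nonpos (by linarith [hψ_le y, c.2.1])]
    exact hK _ _ (by simp [cornerArc_of_nonpos (neg_nonpos.2 y.2.1)])
  have hfst : ∀ y, (K (0, y)).1 = 0 := fun y ↦ Subtype.ext (congrArg Prod.fst (hedge y))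
  have hsnd : ∀ y, ((K (0, y)).2 : ℝ) = -ψ (-y) := fun y ↦ congrArg Prod.snd (hedge y)
  refine ⟨K, hKT, Prod.ext (hfst 1) (Subtype.ext ?_), fun y ↦
    ⟨(K (0, y)).2, ?_, Prod.ext (hfst y) rfl⟩⟩
  · simp [hsnd, hψ']
  · rw [← Subtype.coe_le_coe, hsnd]
    linarith [hψ_le y]

lemma exists_compress_left (hT₀ : 0 < T) (hT₁ : T ≤ 1) {N : Set (I × I)} (hN : N ∈ 𝓝 (0, 0)) :
    ∃ α : I × I ≃ₜ I × I, EqOn α id {p | T ≤ p.1} ∧ α (0, 0) = (0, 0) ∧ ∀ y, α (0, y) ∈ N := by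
  obtain ⟨b, hb, hbN⟩ := exists_Ico_subset_of_mem_nhds
    ((Continuous.prodMk_right (0 : I)).continuousAt.preimage_mem_nhds hN) ⟨1, zero_lt_one⟩
  obtain ⟨c, hc, hc₁⟩ := exists_between (show σ b < 1 by simpa using unitInterval.symm_lt_symm.2 hb)
  obtain ⟨K, hKT, hK₁, hK⟩ := exists_compress_left_upward hT₀ hT₁ hc₁
  refine ⟨(reflectSnd.trans K).trans reflectSnd, fun p hp ↦ ?_, ?_, fun y ↦ ?_⟩
  · have hKp : K (reflectSnd p) = reflectSnd p := hKT hp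
    exact (congrArg reflectSnd hKp).trans (reflectSnd_reflectSnd p)
  · simp [reflectSnd_apply, hK₁]
  · obtain ⟨y', hy', hKy⟩ := hK (σ y)
    have hy'b : σ y' < b := unitInterval.symm_lt_comm.1 (hc.trans_le hy')
    simpa [reflectSnd_apply, hKy] using hbN ⟨unitInterval.nonneg', hy'b⟩

lemma exists_collapse_left (hT₀ : 0 < T) (hT₁ : T ≤ 1) {s : ℝ} (hs : s ∈ Ioo (-1) T) {w : I × I}
    (hw : Prod.map (↑) (↑) w = cornerArc s) {O : Set (I × I)} (hO : O ∈ 𝓝 w) :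
    ∃ k : I × I ≃ₜ I × I, EqOn k id {p | T ≤ p.1} ∧ k (0, 0) = w ∧ ∀ y, k (0, y) ∈ O := by
  obtain ⟨β, ψ, -, hψ, -, hβT, hβ⟩ := exists_slide (u := 0) hT₀ hT₁ ⟨by norm_num, hT₀⟩ hs
  have hβ₀ : β (0, 0) = w := by
    refine (Subtype.val_injective.prodMap Subtype.val_injective) ?_
    rw [hw, hβ (0, 0) 0 (by simp [cornerArc_eq]), hψ]
  obtain ⟨α, hαT, hα₀, hα⟩ := exists_compress_left hT₀ hT₁
    (β.continuous.continuousAt.preimage_mem_nhds (hβ₀ ▸ hO))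
  exact ⟨α.trans β, fun p hp ↦ (congrArg β (hαT hp)).trans (hβT hp), by simp [hα₀, hβ₀], hα⟩

lemma exists_forall_lt_imp_mem {X : Type*} [TopologicalSpace X] [CompactSpace X] {h : X → ℝ}
    (hc : Continuous h) {U : Set X} (hU : IsOpen U) (hzero : ∀ q, h q ≤ 0 → q ∈ U) :
    ∃ t > 0, ∀ q, h q < t → q ∈ U := by
  obtain ⟨t, ht, hle⟩ := hU.isClosed_compl.isCompact.exists_forall_le' hc.continuousOn
    (a := 0) fun q hq ↦ not_le.1 fun h ↦ hq (hzero q h)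
  exact ⟨t, ht, fun q hq ↦ by_contra fun h ↦ hq.not_ge (hle q h)⟩

lemma exists_isCapture_of_push (hT₀ : 0 < T) (hT₁ : T ≤ 1) {s : ℝ} (hs : s ∈ Ioo (-1) T)
    {z w : I × I} (hw : Prod.map (↑) (↑) w = cornerArc s) {O : Set (I × I)} (hO : IsOpen O)
    (hwO : w ∈ O) (hpush : ∀ N ∈ 𝓝 w, ∃ γ : I × I ≃ₜ I × I, EqOn γ id {p | T ≤ p.1} ∧
      MapsTo γ O O ∧ γ.symm z ∈ N) :
    ∃ t K, IsCapture (fun p : I × I ↦ (p.1 : ℝ)) T t z O K := by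
  obtain ⟨k, hkT, hk₀, hk⟩ := exists_collapse_left hT₀ hT₁ hs hw (hO.mem_nhds hwO)
  have hheight : Continuous fun p : I × I ↦ (p.1 : ℝ) := by fun_prop
  obtain ⟨t, ht, htO⟩ := exists_forall_lt_imp_mem hheight (hO.preimage k.continuous) fun q hq ↦ by
    have : q = (0, q.2) := Prod.ext (Subtype.ext (le_antisymm hq q.1.2.1)) rfl
    exact this ▸ hk q.2
  have ht' : 0 < min t (T / 2) := lt_min ht (half_pos hT₀)
  obtain ⟨γ, hγT, hγO, hγ⟩ := hpush (k.symm ⁻¹' {p | (p.1 : ℝ) < min t (T / 2)})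
    (((isOpen_lt hheight continuous_const).preimage k.symm.continuous).mem_nhds
      (by simpa [← hk₀] using ht'))
  exact ⟨min t (T / 2), k.trans γ,
    { pos := ht'
      le_half := min_le_right _ _
      eqOn := fun p hp ↦ (congrArg γ (hkT hp)).trans (hγT hp)
      height_symm_lt := hγ
      mapsTo := fun p hp ↦ hγO (htO p (lt_of_lt_of_le hp (min_le_left _ _))) }⟩

lemma exists_isCapture_of_reflectSnd {z : I × I} {O : Set (I × I)}
    (h : ∃ t K, IsCapture (fun p : I × I ↦ (p.1 : ℝ)) T t (reflectSnd z) (reflectSnd ⁻¹' O) K) :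
    ∃ t K, IsCapture (fun p : I × I ↦ (p.1 : ℝ)) T t z O K := by
  obtain ⟨t, K, hK⟩ := h
  exact ⟨t, _, (hK.conj reflectSnd).mono fun p hp ↦ by
    rwa [mem_preimage, mem_preimage, reflectSnd_reflectSnd] at hp⟩

lemma exists_isCapture_snd_of_lt_one (hT₀ : 0 < T) (hT₁ : T ≤ 1) {z : I × I} (hzT : z.1 < T)
    (hz₁ : z.2 < 1) {V : Set I} (hV : IsOpen V) (hzV : z.2 ∈ V) :
    ∃ t K, IsCapture (fun p : I × I ↦ (p.1 : ℝ)) T t z (Prod.snd ⁻¹' V) K := by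
  have hz₁' : (z.2 : ℝ) < 1 := hz₁
  refine exists_isCapture_of_push hT₀ hT₁ (s := -z.2) (w := (0, z.2))
    ⟨by linarith, by linarith [z.2.2.1]⟩
    (by simp [cornerArc_of_nonpos (neg_nonpos.2 z.2.2.1)]) (hV.preimage continuous_snd) hzV
    fun N hN ↦ ?_
  obtain ⟨u, hu, γ, hγ₁, hγu, hγT⟩ := exists_push (X := I) isClosed_univ isClosed_empty
    (disjoint_empty univ) hzT hT₁ ((Continuous.prodMk_left z.2).continuousAt.preimage_mem_nhds hN)
  let swap := Homeomorph.prodComm I I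
  refine ⟨(swap.trans γ).trans swap, fun p hp ↦ ?_, fun p hp ↦ ?_, ?_⟩
  · have hγp : γ (swap p) = swap p := hγT (.inr hp)
    exact congrArg swap hγp
  · change (γ (swap p)).1 ∈ V
    rwa [hγ₁]
  · have : (swap.trans γ).trans swap (u, z.2) = z := congrArg swap (hγu z.2 (mem_univ _))
    rwa [← this, Homeomorph.symm_apply_apply]

lemma exists_isCapture_fst_of_lt_one (hT₀ : 0 < T) (hT₁ : T ≤ 1) {z : I × I} (hzT : z.1 < T)
    (hz₁ : z.2 < 1) {V : Set I} (hV : IsOpen V) (hzV : z.1 ∈ V) :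
    ∃ t K, IsCapture (fun p : I × I ↦ (p.1 : ℝ)) T t z (Prod.fst ⁻¹' V) K := by
  refine exists_isCapture_of_push hT₀ hT₁ (s := z.1) (w := (z.1, 0))
    ⟨by linarith [z.1.2.1], hzT⟩ (by simp [cornerArc_of_nonneg z.1.2.1])
    (hV.preimage continuous_fst) hzV fun N hN ↦ ?_
  obtain ⟨u, hu, γ, hγ₁, hγu, hγT⟩ := exists_push (A := Iic z.1) (B := {p | T ≤ p}) (r := 1)
    isClosed_Iic (isClosed_le continuous_const continuous_subtype_val)
    (disjoint_left.2 fun p hp hpT ↦ hzT.not_ge (hpT.trans hp)) hz₁ le_rfl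
    ((Continuous.prodMk_right z.1).continuousAt.preimage_mem_nhds hN)
  refine ⟨γ, hγT.mono fun p ↦ .inl, fun p hp ↦ by rwa [mem_preimage, hγ₁], ?_⟩
  have : γ (z.1, u) = z := hγu z.1 self_mem_Iic
  rwa [← this, Homeomorph.symm_apply_apply]

lemma exists_isCapture_snd (hT₀ : 0 < T) (hT₁ : T ≤ 1) {z : I × I} (hzT : z.1 < T) {V : Set I}
    (hV : IsOpen V) (hzV : z.2 ∈ V) :
    ∃ t K, IsCapture (fun p : I × I ↦ (p.1 : ℝ)) T t z (Prod.snd ⁻¹' V) K := by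
  rcases (unitInterval.le_one' (t := z.2)).lt_or_eq with hz₁ | hz₁
  · exact exists_isCapture_snd_of_lt_one hT₀ hT₁ hzT hz₁ hV hzV
  · exact exists_isCapture_of_reflectSnd (exists_isCapture_snd_of_lt_one hT₀ hT₁
      (z := reflectSnd z) hzT
      (by simp [reflectSnd_apply, hz₁]) (hV.preimage unitInterval.continuous_symm)
      (by simpa [reflectSnd_apply] using hzV))

lemma exists_isCapture_fst (hT₀ : 0 < T) (hT₁ : T ≤ 1) {z : I × I} (hzT : z.1 < T) {V : Set I}
    (hV : IsOpen V) (hzV : z.1 ∈ V) :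
    ∃ t K, IsCapture (fun p : I × I ↦ (p.1 : ℝ)) T t z (Prod.fst ⁻¹' V) K := by
  rcases (unitInterval.le_one' (t := z.2)).lt_or_eq with hz₁ | hz₁
  · exact exists_isCapture_fst_of_lt_one hT₀ hT₁ hzT hz₁ hV hzV
  · exact exists_isCapture_of_reflectSnd (exists_isCapture_fst_of_lt_one hT₀ hT₁
      (z := reflectSnd z) hzT
      (by simp [reflectSnd_apply, hz₁]) hV hzV)

end Square

/-! ### Captures in the cube -/

section Cube

variable {ι : Type*}

section Pair

variable [DecidableEq ι] {i j : ι} {Y : Type*} [TopologicalSpace Y]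

/-- The homeomorphism of a power of `Y` acting by `K` on the pair of coordinates `i`, `j` and
trivially on all others. -/
def homeomorphOnPair (hij : i ≠ j) (K : Y × Y ≃ₜ Y × Y) : (ι → Y) ≃ₜ (ι → Y) where
  toFun q := update (update q i (K (q i, q j)).1) j (K (q i, q j)).2
  invFun q := update (update q i (K.symm (q i, q j)).1) j (K.symm (q i, q j)).2
  left_inv q := by
    ext m
    rcases eq_or_ne m j with rfl | hm
    · simp [hij]
    · rcases eq_or_ne m i with rfl | hm' <;> simp [*]
  right_inv q := by
    ext m
    rcases eq_or_ne m j with rfl | hm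
    · simp [hij]
    · rcases eq_or_ne m i with rfl | hm' <;> simp [*]
  continuous_toFun := by fun_prop
  continuous_invFun := by fun_prop

variable (hij : i ≠ j) (K : Y × Y ≃ₜ Y × Y) (q : ι → Y)

lemma homeomorphOnPair_symm : (homeomorphOnPair hij K).symm = homeomorphOnPair hij K.symm := rfl

lemma homeomorphOnPair_pair :
    (homeomorphOnPair hij K q i, homeomorphOnPair hij K q j) = K (q i, q j) := by
  simp [homeomorphOnPair, hij]

lemma homeomorphOnPair_of_ne {m : ι} (hi : m ≠ i) (hj : m ≠ j) :
    homeomorphOnPair hij K q m = q m := by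
  simp [homeomorphOnPair, hi, hj]

lemma homeomorphOnPair_eq_self (h : K (q i, q j) = (q i, q j)) : homeomorphOnPair hij K q = q := by
  simp [homeomorphOnPair, h]

lemma IsCapture.homeomorphOnPair (hij : i ≠ j) {T t : ℝ} {z : ι → I} {O : Set (I × I)}
    {K : I × I ≃ₜ I × I} (hK : IsCapture (fun p : I × I ↦ (p.1 : ℝ)) T t (z i, z j) O K) :
    IsCapture (fun q : ι → I ↦ (q i : ℝ)) T t z {q | (q i, q j) ∈ O} (homeomorphOnPair hij K) where
  pos := hK.pos
  le_half := hK.le_half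
  eqOn q hq := homeomorphOnPair_eq_self hij K q (hK.eqOn hq)
  height_symm_lt := by
    have h := congrArg Prod.fst (homeomorphOnPair_pair hij K.symm z)
    rw [homeomorphOnPair_symm]
    exact (congrArg Subtype.val h).trans_lt hK.height_symm_lt
  mapsTo q hq := by
    rw [mem_ofPred_eq, homeomorphOnPair_pair]
    exact hK.mapsTo hq

/- The spare coordinate `m` makes room for the corner slides that bring the height coordinate `i`
into `V i`; the other coordinates are then captured one at a time, without moving each other. -/
lemma exists_isCapture_finset {m : ι} (him : i ≠ m) {V : ι → Set I} (hV : ∀ j, IsOpen (V j))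
    {T : ℝ} (hT₀ : 0 < T) (hT₁ : T ≤ 1) {z : ι → I} (hzT : z i < T) (hzV : ∀ j, z j ∈ V j)
    {s : Finset ι} (hi : i ∉ s) (hm : m ∉ s) :
    ∃ t K, IsCapture (fun q : ι → I ↦ (q i : ℝ)) T t z {q | ∀ j ∈ insert i s, q j ∈ V j} K ∧
      ∀ q, ∀ j ∉ insert i (insert m s), K q j = q j := by
  induction s using Finset.induction with
  | empty =>
    obtain ⟨t, K, hK⟩ := exists_isCapture_fst hT₀ hT₁ (z := (z i, z m)) hzT (hV i) (hzV i)
    refine ⟨t, _, (hK.homeomorphOnPair him).mono fun q hq ↦ by simpa using hq, fun q j hj ↦ ?_⟩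
    exact homeomorphOnPair_of_ne him K q (by grind) (by grind)
  | insert j s hj ih =>
    obtain ⟨t, K, hK, hKfix⟩ := ih (by grind) (by grind)
    have hij : i ≠ j := by grind
    have hKsymm : ∀ q, K.symm q j = q j := fun q ↦ by
      simpa using (hKfix (K.symm q) j (by grind)).symm
    obtain ⟨t', K', hK'⟩ := exists_isCapture_snd hK.pos (hK.lt.le.trans hT₁)
      (z := (K.symm z i, K.symm z j)) hK.height_symm_lt (hV j) (by simpa [hKsymm] using hzV j)
    refine ⟨t', _, (hK.trans (hK'.homeomorphOnPair hij)).mono ?_, fun q l hl ↦ ?_⟩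
    · rintro q ⟨hqs, hqj⟩
      have hqj : q j ∈ V j := by simpa [hKsymm] using hqj
      grind
    · exact (hKfix _ l (by grind)).trans (homeomorphOnPair_of_ne hij K' q (by grind) (by grind))

end Pair

theorem nonempty_homeomorph_setOf_apply_mem {Y : Type*} [TopologicalSpace Y] (i j : ι)
    (S : Set Y) : Nonempty ({q : ι → Y | q i ∈ S} ≃ₜ {q : ι → Y | q j ∈ S}) := by
  classical
  let e : (ι → Y) ≃ₜ (ι → Y) := Homeomorph.piCongrLeft (Y := fun _ ↦ Y) (Equiv.swap i j)
  have he : ∀ q, e q j = q i := fun q ↦ by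
    have hqi := Equiv.piCongrLeft_apply_apply (fun _ : ι ↦ Y) (Equiv.swap i j) q i
    rw [Equiv.swap_apply_left] at hqi
    exact hqi
  refine ⟨e.sets ?_⟩
  ext q
  simp [he]

variable [Infinite ι]

theorem hasCaptures_coordinate (i : ι) : HasCaptures fun q : ι → I ↦ (q i : ℝ) := by
  classical
  intro T hT₀ hT₁ z hzT O hO
  rw [nhds_pi, mem_pi'] at hO
  obtain ⟨s, V, hV, hVO⟩ := hO
  obtain ⟨m, hm⟩ := Infinite.exists_notMem_finset (insert i s)
  obtain ⟨t, K, hK, -⟩ := exists_isCapture_finset (m := m) (by grind)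
    (fun j ↦ isOpen_interior (s := V j)) hT₀ hT₁ hzT (fun j ↦ mem_interior_iff_mem_nhds.2 (hV j))
    (s := s.erase i) (by grind) (by grind)
  exact ⟨t, K, hK.mono fun q hq ↦ hVO fun j hj ↦ interior_subset (hq j (by grind))⟩

theorem hasCaptures_symm_coordinate (i : ι) : HasCaptures fun q : ι → I ↦ (σ (q i) : ℝ) :=
  (hasCaptures_coordinate i).comp_homeomorph
    (Homeomorph.piCongrRight fun _ ↦ unitInterval.symmHomeomorph)

theorem nonempty_homeomorph_compl_pair_of_lt [Countable ι] {i : ι} {x y : ι → I}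
    (h : x i < y i) : Nonempty ({q : ι → I | q i ∈ Ioo 0 1} ≃ₜ ({x, y}ᶜ : Set (ι → I))) := by
  obtain ⟨c, hxc, hcy⟩ := exists_between h
  have hinterior : {q : ι → I | q i ∈ Ioo 0 1} = {q | (0 : ℝ) < q i ∧ (0 : ℝ) < σ (q i)} := by
    ext q
    simp
  rw [hinterior]
  have hc₀ : 0 < c := unitInterval.nonneg'.trans_lt hxc
  have hc₁ : c < 1 := hcy.trans_le unitInterval.le_one'
  have hσc₀ : 0 < σ c := by simpa using unitInterval.symm_lt_symm.2 hc₁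
  exact nonempty_homeomorph_compl_pair (hasCaptures_coordinate i) (hasCaptures_symm_coordinate i)
    (by fun_prop) (by fun_prop) hc₀ c.2.2 hσc₀ (σ c).2.2 hxc (unitInterval.symm_lt_symm.2 hcy)
    fun q ↦ (le_total c (q i)).imp_right unitInterval.symm_le_symm.2

theorem nonempty_homeomorph_compl_pair_of_ne [Countable ι] (i : ι) {x y : ι → I} (hxy : x ≠ y) :
    Nonempty ({q : ι → I | q i ∈ Ioo 0 1} ≃ₜ ({x, y}ᶜ : Set (ι → I))) := by
  obtain ⟨j, hj⟩ := Function.ne_iff.1 hxy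
  wlog hlt : x j < y j generalizing x y
  · rw [pair_comm]
    exact this hxy.symm hj.symm (hj.lt_or_gt.resolve_left hlt)
  obtain ⟨f⟩ := nonempty_homeomorph_setOf_apply_mem i j (Ioo (0 : I) 1)
  obtain ⟨g⟩ := nonempty_homeomorph_compl_pair_of_lt hlt
  exact ⟨f.trans g⟩

lemma iccHomeoI_mem_Ioo_iff {a b : ℝ} (hab : a < b) (t : Icc a b) :
    iccHomeoI a b hab t ∈ Ioo 0 1 ↔ (t : ℝ) ∈ Ioo a b := by
  have hba : 0 < b - a := sub_pos.2 hab
  rw [mem_Ioo, ← Subtype.coe_lt_coe, ← Subtype.coe_lt_coe, iccHomeoI_apply_coe]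
  simp only [Icc.coe_zero, Icc.coe_one]
  rw [div_lt_one hba, div_pos_iff_of_pos_right hba, sub_pos, sub_lt_sub_iff_right, mem_Ioo]

theorem compl_faces_homeomorph_compl_pair_general [Countable ι] {a b : ℝ} (hab : a < b) (i : ι)
    {x y : ι → Icc a b} (hxy : x ≠ y) :
    Nonempty ({q : ι → Icc a b | (q i : ℝ) ∈ Ioo a b} ≃ₜ ({x, y}ᶜ : Set (ι → Icc a b))) := by
  let e : (ι → Icc a b) ≃ₜ (ι → I) := Homeomorph.piCongrRight fun _ ↦ iccHomeoI a b hab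
  obtain ⟨f⟩ := nonempty_homeomorph_compl_pair_of_ne i (e.injective.ne hxy)
  have hfaces : {q : ι → Icc a b | (q i : ℝ) ∈ Ioo a b} = e ⁻¹' {q | q i ∈ Ioo 0 1} :=
    Set.ext fun q ↦ (iccHomeoI_mem_Ioo_iff hab (q i)).symm
  have hpair : ({x, y}ᶜ : Set (ι → Icc a b)) = e ⁻¹' {e x, e y}ᶜ := by
    ext
    simp
  exact ⟨((e.sets hfaces).trans f).trans (e.sets hpair).symm⟩

end Cube

lemma compl_faces_eq_setOf_mem_Ioo (i : ℕ) :
    (negFace i ∪ posFace i)ᶜ = {q : HilbertCube | (q i : ℝ) ∈ Ioo (-1) 1} := by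
  ext q
  simp only [mem_compl_iff, mem_union, not_or]
  exact (and_congr (q i).2.1.lt_iff_ne' (q i).2.2.lt_iff_ne).symm

/-- For distinct points `x, y` of the Hilbert cube, the complement of the
union of the two opposite faces `W_1^- ∪ W_1^+` is homeomorphic to `Q \ {x, y}`. -/
theorem compl_faces_homeomorph_compl_pair (x y : HilbertCube) (hxy : x ≠ y) :
    Nonempty (((negFace 0 ∪ posFace 0)ᶜ : Set HilbertCube) ≃ₜ
      (({x, y} : Set HilbertCube)ᶜ : Set HilbertCube)) := by
  rw [compl_faces_eq_setOf_mem_Ioo]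
  exact compl_faces_homeomorph_compl_pair_general (by norm_num) 0 hxy
end

section
/- For any two distinct points x, y of the Hilbert cube Q there exists a continuous map f̄ : Q → Q such that f̄(W_1^-) = {x}, f̄(W_1^+) = {y}, and the restriction of f̄ to Q \ (W_1^- ∪ W_1^+) is a homeomorphism onto Q \ {x, y}. -/
open Set

/-!
Write `Q` as `I × W` with `W = I ^ ℕ`, split along a coordinate in which `x` and `y` differ. It is
enough to collapse the bottom `{0} × W` to a point `(a, u)` by a map fixing everything above a
given height `m > a`: the same construction upside down collapses the top, and the two compose.

To reach `(0, u)`, shrink the slice at height `t` to a box of size `t` about `u`. The image is the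
region above the graph of a continuous function on `W`, and rescaling vertically (`raise`)
identifies that region with the whole of `I × W`.

It remains to move `(0, u)` to `(a, u)` by a homeomorphism, which is where infinitely many
coordinates are needed. After reflecting coordinates, `u n ≥ 1 / 2` for all `n`. The region above
the graph of a power of `totalExcess` is identified with `I × W` vertically by `raise`, and slice by
slice by `squeeze`, which fits the coordinates one by one into a budget. Since
`∑ k ≥ n, (2 / 3) ^ k = 3 * (2 / 3) ^ n`, what `u` spends after any step would pay for one more
coordinate of maximal excess, so `squeeze` fixes the point of the graph over `u`, whereas `raise`
carries `(0, u)` to it. The homeomorphism is `raise` followed by the inverse of `squeeze`.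
-/

section Collapse

variable {X Y Z : Type*} [TopologicalSpace X] [TopologicalSpace Y] [TopologicalSpace Z]

/-- A collapse over `S`: a continuous surjection whose only nontrivial fibres lie over points of
`S`. A collapse over `∅` is a continuous bijection. -/
structure IsCollapse (f : X → Y) (S : Set Y) : Prop where
  continuous : Continuous f
  surjective : Function.Surjective f
  injOn : InjOn f (f ⁻¹' S)ᶜ

namespace IsCollapse

theorem of_homeomorph (e : X ≃ₜ Y) : IsCollapse e ∅ :=
  ⟨e.continuous, e.surjective, e.injective.injOn⟩

theorem injective {f : X → Y} (hf : IsCollapse f ∅) : Function.Injective f := by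
  simpa [injOn_univ] using hf.injOn

theorem comp {f : X → Y} {g : Y → Z} {S : Set Y} {T : Set Z}
    (hg : IsCollapse g T) (hf : IsCollapse f S) : IsCollapse (g ∘ f) (T ∪ g '' S) where
  continuous := hg.continuous.comp hf.continuous
  surjective := hg.surjective.comp hf.surjective
  injOn p hp q hq hpq := by
    simp only [mem_compl_iff, mem_preimage, Function.comp_apply, mem_union, not_or] at hp hq
    exact hf.injOn (fun h ↦ hp.2 (mem_image_of_mem g h)) (fun h ↦ hq.2 (mem_image_of_mem g h))
      (hg.injOn hp.1 hq.1 hpq)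

theorem preimage_eq_of_eqOn_id {f : X → X} {S B : Set X} (hf : IsCollapse f S)
    (hB : EqOn f id B) (hBS : Disjoint B S) : f ⁻¹' B = B := by
  refine Subset.antisymm (fun p hp ↦ ?_) fun p hp ↦ by simpa [hB hp] using hp
  have hfix : f (f p) = f p := hB hp
  have hnot : f p ∉ S := disjoint_left.1 hBS hp
  have hp_eq : f p = p := hf.injOn (by simpa [hfix] using hnot) hnot hfix
  exact hp_eq ▸ hp

theorem exists_homeomorph_compl [CompactSpace X] [T2Space Y] {f : X → Y} {S : Set Y}
    (hf : IsCollapse f S) :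
    ∃ g : ((f ⁻¹' S)ᶜ : Set X) ≃ₜ (Sᶜ : Set Y), ∀ z, (g z : Y) = f z := by
  have hhomeo : IsHomeomorph (Sᶜ.restrictPreimage f) := by
    refine isHomeomorph_iff_continuous_isClosedMap_bijective.2
      ⟨hf.continuous.restrictPreimage, hf.continuous.isClosedMap.restrictPreimage _, ?_,
        restrictPreimage_surjective _ hf.surjective⟩
    exact fun p q hpq ↦ Subtype.ext (hf.injOn p.2 q.2 (congrArg Subtype.val hpq))
  exact ⟨hhomeo.homeomorph, fun _ ↦ rfl⟩

theorem exists_lift [CompactSpace Y] [T2Space Z] {E : Y → Z} {G : X → Z} {S : Set Y}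
    (hE : Continuous E) (hE_inj : Function.Injective E) (hG : Continuous G)
    (hrange : range G = range E) (hG_inj : InjOn G (G ⁻¹' (E '' S))ᶜ) :
    ∃ C : X → Y, IsCollapse C S ∧ ∀ p, E (C p) = G p := by
  choose C hC using fun p ↦ hrange.subset (mem_range_self p)
  have hC_comp : E ∘ C = G := funext hC
  have hE_emb := (hE.isClosedEmbedding hE_inj).isEmbedding
  refine ⟨C, ⟨hE_emb.continuous_iff.2 (hC_comp ▸ hG), fun y ↦ ?_, ?_⟩, hC⟩
  · obtain ⟨p, hp⟩ := hrange.superset (mem_range_self y)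
    exact ⟨p, hE_inj ((hC p).trans hp)⟩
  · have hpre : G ⁻¹' (E '' S) = C ⁻¹' S := by
      rw [← hC_comp, preimage_comp, hE_inj.preimage_image]
    intro p hp q hq hpq
    exact hG_inj (hpre ▸ hp) (hpre ▸ hq) (by rw [← hC, ← hC, hpq])

end IsCollapse

end Collapse

section UnitInterval

open scoped unitInterval
open unitInterval (symmHomeomorph)

section Raise

variable {W : Type*} {m : I} {ψ : W → I}

/-- Pushes the points `(s, w)` with `s < m` up the fibre of `w`, moving the floor `s = 0` to the
graph of `m * ψ`. -/
noncomputable def raise (m : I) (ψ : W → I) (p : I × W) : I × W :=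
  (max p.1 (Icc.convexComb p.1 m (ψ p.2)), p.2)

theorem raise_of_le {p : I × W} (hp : m ≤ p.1) : raise m ψ p = p := by
  refine Prod.ext (max_eq_left ?_) rfl
  rw [← Icc.convexComb_symm]
  exact Icc.convexComb_le hp _

theorem coe_fst_raise_of_le {p : I × W} (hp : p.1 ≤ m) :
    ((raise m ψ p).1 : ℝ) = (1 - ψ p.2) * p.1 + ψ p.2 * m :=
  congrArg Subtype.val (max_eq_right (Icc.le_convexComb hp _))

theorem coe_fst_raise_zero (w : W) : ((raise m ψ (0, w)).1 : ℝ) = m * ψ w := by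
  rw [coe_fst_raise_of_le (unitInterval.nonneg m)]
  simp [mul_comm]

theorem continuous_raise [TopologicalSpace W] (hψ : Continuous ψ) : Continuous (raise m ψ) := by
  have hcomb : Continuous fun p : I × W ↦ Icc.convexComb p.1 m (ψ p.2) :=
    Icc.continuous_convexComb_prod.comp
      (continuous_fst.prodMk (continuous_const.prodMk (hψ.comp continuous_snd)))
  exact (continuous_fst.max hcomb).prodMk continuous_snd

theorem raise_injective (hψ : ∀ w, ψ w < 1) : Function.Injective (raise m ψ) := by
  have hmono : ∀ w, StrictMono fun s : I ↦ (raise m ψ (s, w)).1 := fun w s t hst ↦ by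
    refine max_lt_max hst (Subtype.coe_lt_coe.1 ?_)
    have hψw : (0 : ℝ) < 1 - ψ w := sub_pos.2 (hψ w)
    simp only [Icc.coe_convexComb]
    gcongr
  rintro ⟨s, w⟩ ⟨t, w'⟩ h
  obtain rfl : w = w' := congrArg Prod.snd h
  exact Prod.ext ((hmono w).injective (congrArg Prod.fst h)) rfl

theorem range_raise (hψ : ∀ w, ψ w < 1) :
    range (raise m ψ) = {p | (m * ψ p.2 : ℝ) ≤ p.1} := by
  refine Subset.antisymm (range_subset_iff.2 fun p ↦ ?_) ?_
  · have hcomb : (m * ψ p.2 : ℝ) ≤ (Icc.convexComb p.1 m (ψ p.2) : ℝ) := by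
      rw [Icc.coe_convexComb]
      nlinarith [unitInterval.nonneg p.1, unitInterval.le_one (ψ p.2)]
    exact hcomb.trans (Subtype.coe_le_coe.2 (le_max_right _ _))
  · rintro ⟨t, w⟩ (ht : (m * ψ w : ℝ) ≤ t)
    rcases le_total m t with hmt | htm
    · exact ⟨(t, w), raise_of_le hmt⟩
    have hψw : (0 : ℝ) < 1 - ψ w := sub_pos.2 (hψ w)
    have htm' : (t : ℝ) ≤ m := htm
    have hsm : (t - m * ψ w) / (1 - ψ w) ≤ (m : ℝ) := by
      rw [div_le_iff₀ hψw]
      linarith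
    let s : I := ⟨(t - m * ψ w) / (1 - ψ w),
      div_nonneg (sub_nonneg.2 ht) hψw.le, hsm.trans m.2.2⟩
    refine ⟨(s, w), Prod.ext (Subtype.ext ?_) rfl⟩
    rw [coe_fst_raise_of_le hsm, mul_div_cancel₀ _ hψw.ne']
    ring

end Raise

section Cone

theorem continuous_iSup_of_summable_bound {ι X : Type*} [Nonempty ι] [TopologicalSpace X]
    {f : ι → X → ℝ} {b : ι → ℝ} (hf : ∀ i, Continuous (f i)) (hb : Summable b)
    (hfb : ∀ i x, |f i x| ≤ b i) : Continuous fun x ↦ ⨆ i, f i x := by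
  have hdiff : ∀ i x y, |f i x - f i y| ≤ b i + b i := fun i x y ↦
    (abs_sub _ _).trans (add_le_add (hfb i x) (hfb i y))
  have hsum : ∀ x y, Summable fun i ↦ |f i x - f i y| := fun x y ↦
    .of_nonneg_of_le (fun _ ↦ abs_nonneg _) (fun i ↦ hdiff i x y) (hb.add hb)
  have hbdd : ∀ x, BddAbove (range fun i ↦ f i x) := fun x ↦
    ⟨∑' i, b i, forall_mem_range.2 fun i ↦ (le_abs_self _).trans <| (hfb i x).trans <|
      hb.le_tsum i fun j _ ↦ (abs_nonneg _).trans (hfb j x)⟩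
  have hle : ∀ x y, ⨆ i, f i x ≤ (⨆ i, f i y) + ∑' i, |f i x - f i y| := fun x y ↦
    ciSup_le fun i ↦ by
      have h1 := le_ciSup (hbdd y) i
      have h2 := (hsum x y).le_tsum i fun j _ ↦ abs_nonneg _
      linarith [le_abs_self (f i x - f i y)]
  refine continuous_iff_continuousAt.2 fun y ↦ tendsto_iff_dist_tendsto_zero.2 ?_
  have htendsto : Filter.Tendsto (fun x ↦ ∑' i, |f i x - f i y|) (nhds y) (nhds 0) := by
    have hcont : Continuous fun x ↦ ∑' i, |f i x - f i y| :=
      continuous_tsum (fun i ↦ by fun_prop) (hb.add hb) fun i x ↦ by simpa using hdiff i x y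
    simpa using hcont.tendsto y
  refine squeeze_zero (fun _ ↦ dist_nonneg) (fun x ↦ ?_) htendsto
  rw [Real.dist_eq, abs_sub_le_iff]
  refine ⟨by linarith [hle x y], ?_⟩
  simp only [abs_sub_comm (f _ x)]
  linarith [hle y x]

/-- The affine parametrisation by `I` of the interval `I ∩ [c - r, c + r]`. -/
noncomputable def segmentParam (c : I) (r : ℝ) (z : I) : I :=
  Icc.convexComb (projIcc 0 1 zero_le_one (c - r)) (projIcc 0 1 zero_le_one (c + r)) z

variable {c : I} {r : ℝ}

theorem continuous_segmentParam (c : I) :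
    Continuous fun q : ℝ × I ↦ segmentParam c q.1 q.2 := by
  have hlo : Continuous fun q : ℝ × I ↦ projIcc (0 : ℝ) 1 zero_le_one (c - q.1) :=
    continuous_projIcc.comp (by fun_prop)
  have hhi : Continuous fun q : ℝ × I ↦ projIcc (0 : ℝ) 1 zero_le_one (c + q.1) :=
    continuous_projIcc.comp (by fun_prop)
  exact Icc.continuous_convexComb_prod.comp (hlo.prodMk (hhi.prodMk continuous_snd))

theorem segmentParam_zero (c z : I) : segmentParam c 0 z = c := by
  simp [segmentParam]

theorem segmentParam_of_one_le (hr : 1 ≤ r) (z : I) : segmentParam c r z = z := by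
  rw [segmentParam, projIcc_of_le_left _ (by linarith [c.2.2]),
    projIcc_of_right_le _ (by linarith [c.2.1])]
  exact Icc.convexComb_zero_one z

theorem segmentParam_injective (hr : 0 < r) : Function.Injective (segmentParam c r) := by
  have hlt : (projIcc 0 1 zero_le_one (c - r) : ℝ) < projIcc 0 1 zero_le_one (c + r) := by
    simp only [coe_projIcc]
    have := c.2.1
    have := c.2.2
    grind
  intro z z' h
  have h' := congrArg Subtype.val h
  simp only [segmentParam, Icc.coe_convexComb] at h'
  exact Subtype.ext (mul_right_cancel₀ (sub_pos.2 hlt).ne' (by linarith))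

theorem range_segmentParam (hr : 0 ≤ r) :
    range (segmentParam c r) = {w : I | |(w - c : ℝ)| ≤ r} := by
  have hle : projIcc (0 : ℝ) 1 zero_le_one (c - r) ≤ projIcc 0 1 zero_le_one (c + r) :=
    monotone_projIcc _ (by linarith)
  have hmem (w : I) : |(w - c : ℝ)| ≤ r ↔
      w ∈ Icc (projIcc (0 : ℝ) 1 zero_le_one (c - r)) (projIcc 0 1 zero_le_one (c + r)) := by
    rw [mem_Icc, ← Subtype.coe_le_coe, ← Subtype.coe_le_coe, coe_projIcc, coe_projIcc, abs_le]
    have := w.2.1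
    have := w.2.2
    have := c.2.1
    have := c.2.2
    grind
  ext w
  rw [mem_ofPred_eq, hmem]
  refine ⟨?_, fun hw ↦ ⟨_, (Icc.eq_convexComb hw.1 hw.2).symm⟩⟩
  rintro ⟨z, rfl⟩
  exact ⟨Icc.le_convexComb hle z, Icc.convexComb_le hle z⟩

/-- The weighted sup-distance from `u`; its balls are the boxes
`∏ₙ I ∩ [u n - 2 ^ (n + 1) * r, u n + 2 ^ (n + 1) * r]`. -/
noncomputable def boxGauge (u w : ℕ → I) : ℝ := ⨆ n, |(w n - u n : ℝ)| / 2 ^ (n + 1)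

theorem abs_sub_div_two_pow_le (x y : I) (n : ℕ) :
    |(x - y : ℝ)| / 2 ^ (n + 1) ≤ 1 / 2 / 2 ^ n := by
  rw [div_div, ← pow_succ']
  gcongr
  exact abs_le.2 ⟨by linarith [x.2.1, y.2.2], by linarith [x.2.2, y.2.1]⟩

theorem abs_sub_div_two_pow_le_half (x y : I) (n : ℕ) :
    |(x - y : ℝ)| / 2 ^ (n + 1) ≤ 1 / 2 :=
  (abs_sub_div_two_pow_le x y n).trans (div_le_self (by norm_num) (one_le_pow₀ one_le_two))

theorem continuous_boxGauge (u : ℕ → I) : Continuous (boxGauge u) :=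
  continuous_iSup_of_summable_bound (fun n ↦ by fun_prop) (summable_geometric_two' 1) fun n w ↦ by
    rw [abs_of_nonneg (by positivity)]
    exact abs_sub_div_two_pow_le _ _ n

theorem boxGauge_nonneg (u w : ℕ → I) : 0 ≤ boxGauge u w :=
  Real.iSup_nonneg fun _ ↦ by positivity

theorem boxGauge_le_half (u w : ℕ → I) : boxGauge u w ≤ 1 / 2 :=
  ciSup_le fun n ↦ abs_sub_div_two_pow_le_half _ _ n

theorem boxGauge_le_iff {u w : ℕ → I} {r : ℝ} :
    boxGauge u w ≤ r ↔ ∀ n, |(w n - u n : ℝ)| ≤ 2 ^ (n + 1) * r := by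
  have hbdd : BddAbove (range fun n ↦ |(w n - u n : ℝ)| / 2 ^ (n + 1)) :=
    ⟨1 / 2, forall_mem_range.2 fun n ↦ abs_sub_div_two_pow_le_half _ _ n⟩
  refine (ciSup_le_iff hbdd).trans (forall_congr' fun n ↦ ?_)
  rw [div_le_iff₀' (by positivity)]

theorem boxGauge_self (u : ℕ → I) : boxGauge u u = 0 :=
  (boxGauge_le_iff.2 fun n ↦ by simp).antisymm (boxGauge_nonneg u u)

/-- Maps the slice at height `t` onto the ball of radius `t / m` about `u` for `boxGauge u`. -/
noncomputable def boxMap (m : I) (u : ℕ → I) (p : I × (ℕ → I)) : I × (ℕ → I) :=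
  (p.1, fun n ↦ segmentParam (u n) (2 ^ (n + 1) * (p.1 / m)) (p.2 n))

variable {m : I}

theorem continuous_boxMap (m : I) (u : ℕ → I) : Continuous (boxMap m u) :=
  continuous_fst.prodMk <| continuous_pi fun n ↦
    (continuous_segmentParam (u n)).comp (f := fun p : I × (ℕ → I) ↦ (_, p.2 n)) (by fun_prop)

theorem boxMap_zero (m : I) (u z : ℕ → I) : boxMap m u (0, z) = (0, u) := by
  simp [boxMap, segmentParam_zero]

theorem boxMap_of_le (hm : 0 < m) {u : ℕ → I} {p : I × (ℕ → I)} (hp : m ≤ p.1) :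
    boxMap m u p = p := by
  have hratio : (1 : ℝ) ≤ p.1 / m := (one_le_div (Subtype.coe_lt_coe.2 hm)).2 hp
  refine Prod.ext rfl (funext fun n ↦ segmentParam_of_one_le ?_ _)
  exact one_le_mul_of_one_le_of_one_le (one_le_pow₀ one_le_two) hratio

theorem boxMap_injOn (hm : 0 < m) (u : ℕ → I) : InjOn (boxMap m u) {p | p.1 ≠ 0} := by
  rintro ⟨t, z⟩ ht ⟨t', z'⟩ - h
  obtain rfl : t = t' := congrArg Prod.fst h
  have hr (n : ℕ) : (0 : ℝ) < 2 ^ (n + 1) * (t / m) :=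
    mul_pos (by positivity) (div_pos (unitInterval.pos_iff_ne_zero.2 ht) hm)
  exact Prod.ext rfl <| funext fun n ↦
    segmentParam_injective (hr n) (congrFun (congrArg Prod.snd h) n)

theorem range_boxMap (hm : 0 < m) (u : ℕ → I) :
    range (boxMap m u) = {p | m * boxGauge u p.2 ≤ p.1} := by
  ext ⟨t, w⟩
  have hr (n : ℕ) : (0 : ℝ) ≤ 2 ^ (n + 1) * (t / m) :=
    mul_nonneg (by positivity) (div_nonneg t.2.1 m.2.1)
  have hslice : (t, w) ∈ range (boxMap m u) ↔
      ∀ n, w n ∈ range (segmentParam (u n) (2 ^ (n + 1) * (t / m))) := by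
    refine ⟨?_, fun h ↦ ?_⟩
    · rintro ⟨⟨s, z⟩, hz⟩ n
      obtain ⟨rfl, rfl⟩ := Prod.mk.inj hz
      exact mem_range_self _
    · choose z hz using h
      exact ⟨(t, z), Prod.ext rfl (funext hz)⟩
  have hm' : (0 : ℝ) < m := hm
  rw [hslice, mem_ofPred_eq, ← le_div_iff₀' hm', boxGauge_le_iff]
  exact forall_congr' fun n ↦ by rw [range_segmentParam (hr n), mem_ofPred_eq]

theorem exists_isCollapse_bottom_zero (hm : 0 < m) (u : ℕ → I) :
    ∃ C : I × (ℕ → I) → I × (ℕ → I), IsCollapse C {(0, u)} ∧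
      C ⁻¹' {(0, u)} = {p | p.1 = 0} ∧ EqOn C id {p | m ≤ p.1} := by
  let ψ (w : ℕ → I) : I := ⟨boxGauge u w, boxGauge_nonneg u w, by linarith [boxGauge_le_half u w]⟩
  have hψ : Continuous ψ := (continuous_boxGauge u).subtype_mk _
  have hψ_lt (w : ℕ → I) : ψ w < 1 :=
    Subtype.coe_lt_coe.1 ((boxGauge_le_half u w).trans_lt one_half_lt_one)
  have hinj := raise_injective (m := m) hψ_lt
  have hraise : raise m ψ (0, u) = (0, u) :=
    Prod.ext (Subtype.ext (by rw [coe_fst_raise_zero]; simp [ψ, boxGauge_self])) rfl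
  have hbox : boxMap m u ⁻¹' {(0, u)} = {p | p.1 = 0} := by
    refine Subset.antisymm (fun p hp ↦ congrArg Prod.fst hp) ?_
    rintro ⟨_, z⟩ rfl
    exact boxMap_zero m u z
  obtain ⟨C, hC, hC_eq⟩ := IsCollapse.exists_lift (S := {(0, u)}) (continuous_raise hψ) hinj
    (continuous_boxMap m u) ((range_boxMap hm u).trans (range_raise hψ_lt).symm)
    (by rw [image_singleton, hraise, hbox]; exact boxMap_injOn hm u)
  refine ⟨C, hC, ?_, fun p hp ↦ hinj ?_⟩
  · ext p
    rw [← hbox, mem_preimage, mem_preimage, mem_singleton_iff, mem_singleton_iff, ← hC_eq]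
    exact (hinj.eq_iff' hraise).symm
  · rw [hC_eq, boxMap_of_le hm hp, id, raise_of_le hp]

end Cone

section Squeeze

/-- The amount by which a coordinate exceeds `1 / 4`, rescaled to lie in `[0, 3]`. -/
def excess (x : I) : ℝ := max 0 (4 * x - 1)

theorem excess_nonneg (x : I) : 0 ≤ excess x := le_max_left _ _

theorem excess_le_three (x : I) : excess x ≤ 3 :=
  max_le (by norm_num) (by linarith [x.2.2])

theorem one_le_excess {x : I} (hx : (1 / 2 : ℝ) ≤ x) : 1 ≤ excess x :=
  le_max_of_le_right (by linarith)

theorem continuous_excess : Continuous excess := by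
  unfold excess
  fun_prop

/-- The largest coordinate whose excess is at most `ρ`, for `0 ≤ ρ`. -/
noncomputable def excessCap (ρ : ℝ) : I := projIcc 0 1 zero_le_one ((ρ + 1) / 4)

variable {ρ b : ℝ} {w : ℕ → I}

theorem continuous_excessCap : Continuous excessCap :=
  continuous_projIcc.comp (by fun_prop)

theorem excessCap_of_three_le (hρ : 3 ≤ ρ) : excessCap ρ = 1 :=
  projIcc_of_right_le _ (by linarith)

theorem excessCap_pos (hρ : 0 ≤ ρ) : (0 : ℝ) < excessCap ρ := by
  rw [excessCap, coe_projIcc]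
  exact lt_max_of_lt_right (lt_min one_pos (by linarith))

theorem excess_le_iff_le_excessCap (hρ : 0 ≤ ρ) {x : I} : excess x ≤ ρ ↔ x ≤ excessCap ρ := by
  rw [excess, ← Subtype.coe_le_coe, excessCap, coe_projIcc, max_le_iff]
  have := x.2.1
  have := x.2.2
  grind

/-- The geometrically weighted sum of the excesses of the coordinates of `w`. -/
noncomputable def totalExcess (w : ℕ → I) : ℝ := ∑' n, (2 / 3) ^ n * excess (w n)

theorem hasSum_two_thirds_pow : HasSum (fun n : ℕ ↦ (2 / 3 : ℝ) ^ n) 3 := by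
  convert hasSum_geometric_of_lt_one (r := (2 / 3 : ℝ)) (by norm_num) (by norm_num) using 1
  norm_num

theorem two_thirds_pow_mul_excess_le (x : I) (n : ℕ) :
    (2 / 3) ^ n * excess x ≤ (2 / 3 : ℝ) ^ n * 3 := by
  gcongr
  exact excess_le_three x

theorem summable_totalExcess (w : ℕ → I) : Summable fun n ↦ (2 / 3) ^ n * excess (w n) :=
  .of_nonneg_of_le (fun n ↦ mul_nonneg (by positivity) (excess_nonneg _))
    (fun n ↦ two_thirds_pow_mul_excess_le _ n) (hasSum_two_thirds_pow.summable.mul_right 3)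

theorem continuous_totalExcess : Continuous totalExcess :=
  continuous_tsum (fun n ↦ by have := continuous_excess; fun_prop)
    (hasSum_two_thirds_pow.summable.mul_right 3) fun n w ↦ by
      rw [Real.norm_of_nonneg (mul_nonneg (by positivity) (excess_nonneg _))]
      exact two_thirds_pow_mul_excess_le _ n

theorem totalExcess_le_nine (w : ℕ → I) : totalExcess w ≤ 9 := by
  have h := hasSum_two_thirds_pow.mul_right 3
  calc totalExcess w ≤ 3 * 3 := hasSum_le (fun n ↦ two_thirds_pow_mul_excess_le (w n) n)
        (summable_totalExcess w).hasSum h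
    _ = 9 := by norm_num

theorem totalExcess_nonneg (w : ℕ → I) : 0 ≤ totalExcess w :=
  tsum_nonneg fun n ↦ mul_nonneg (by positivity) (excess_nonneg _)

theorem three_le_totalExcess (hw : ∀ n, 1 ≤ excess (w n)) : 3 ≤ totalExcess w :=
  hasSum_le (fun n ↦ le_mul_of_one_le_right (by positivity) (hw n)) hasSum_two_thirds_pow
    (summable_totalExcess w).hasSum

theorem totalExcess_eq_add_shift (w : ℕ → I) :
    totalExcess w = excess (w 0) + 2 / 3 * totalExcess fun n ↦ w (n + 1) := by
  rw [totalExcess, (summable_totalExcess w).tsum_eq_zero_add, totalExcess, ← tsum_mul_left]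
  simp only [pow_zero, one_mul, pow_succ', mul_assoc]

/-- What is left of a budget `b` for `totalExcess w` after the first `n` coordinates, in units
of the weight `(2 / 3) ^ n` of the next coordinate. -/
noncomputable def remainingBudget (b : ℝ) (w : ℕ → I) : ℕ → ℝ
  | 0 => b
  | n + 1 => 3 / 2 * (remainingBudget b w n - excess (w n))

theorem totalExcess_shift_le_remainingBudget (hb : totalExcess w ≤ b) (n : ℕ) :
    totalExcess (fun k ↦ w (k + n)) ≤ remainingBudget b w n := by
  induction n with
  | zero => exact hb
  | succ n ih =>
    have hshift := totalExcess_eq_add_shift fun k ↦ w (k + n)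
    simp only [zero_add, add_right_comm _ 1 n] at hshift
    simp only [remainingBudget, ← add_assoc]
    linarith

theorem excess_le_remainingBudget (hb : totalExcess w ≤ b) (n : ℕ) :
    excess (w n) ≤ remainingBudget b w n := by
  have hshift := totalExcess_eq_add_shift fun k ↦ w (k + n)
  have hnonneg := totalExcess_nonneg fun k ↦ w (k + 1 + n)
  have hle := totalExcess_shift_le_remainingBudget hb n
  simp only [zero_add] at hshift
  linarith

theorem three_le_remainingBudget (hw : ∀ n, 1 ≤ excess (w n)) (hb : totalExcess w ≤ b) (n : ℕ) :
    3 ≤ remainingBudget b w n :=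
  (three_le_totalExcess fun k ↦ hw (k + n)).trans (totalExcess_shift_le_remainingBudget hb n)

theorem nine_le_remainingBudget (hb : 9 ≤ b) (w : ℕ → I) (n : ℕ) : 9 ≤ remainingBudget b w n := by
  induction n with
  | zero => exact hb
  | succ n ih =>
    rw [remainingBudget]
    linarith [excess_le_three (w n)]

theorem sum_add_remainingBudget (b : ℝ) (w : ℕ → I) (n : ℕ) :
    ∑ k ∈ Finset.range n, (2 / 3) ^ k * excess (w k) + (2 / 3) ^ n * remainingBudget b w n = b := by
  induction n with
  | zero => simp [remainingBudget]
  | succ n ih =>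
    rw [Finset.sum_range_succ, remainingBudget, pow_succ]
    linarith

theorem totalExcess_le_of_remainingBudget_nonneg (h : ∀ n, 0 ≤ remainingBudget b w n) :
    totalExcess w ≤ b :=
  Real.tsum_le_of_sum_range_le (fun n ↦ mul_nonneg (by positivity) (excess_nonneg _)) fun n ↦ by
    have hrest : 0 ≤ (2 / 3) ^ n * remainingBudget b w n := mul_nonneg (by positivity) (h n)
    linarith [sum_add_remainingBudget b w n]

/-- `squeezeBudget b v n` is the budget available to coordinate `n` of `squeeze b v`. -/
noncomputable def squeezeBudget (b : ℝ) (v : ℕ → I) : ℕ → ℝ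
  | 0 => b
  | n + 1 => 3 / 2 * (squeezeBudget b v n - excess (v n * excessCap (squeezeBudget b v n)))

/-- Rescales the coordinates of `v` one after the other, each by the largest value that the budget
`b` for the total excess still allows. -/
noncomputable def squeeze (b : ℝ) (v : ℕ → I) (n : ℕ) : I :=
  v n * excessCap (squeezeBudget b v n)

theorem squeezeBudget_eq (b : ℝ) (v : ℕ → I) (n : ℕ) :
    squeezeBudget b v n = remainingBudget b (squeeze b v) n := by
  induction n with
  | zero => rfl
  | succ n ih => rw [remainingBudget, ← ih, squeezeBudget, squeeze]

theorem squeezeBudget_nonneg (hb : 0 ≤ b) (v : ℕ → I) (n : ℕ) : 0 ≤ squeezeBudget b v n := by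
  induction n with
  | zero => exact hb
  | succ n ih =>
    have h : excess (v n * excessCap (squeezeBudget b v n)) ≤ squeezeBudget b v n :=
      (excess_le_iff_le_excessCap ih).2 unitInterval.mul_le_right
    rw [squeezeBudget]
    linarith

theorem continuous_squeezeBudget (n : ℕ) :
    Continuous fun q : ℝ × (ℕ → I) ↦ squeezeBudget q.1 q.2 n := by
  induction n with
  | zero => exact continuous_fst
  | succ n ih =>
    have := continuous_excess
    have := continuous_excessCap
    simp only [squeezeBudget]
    fun_prop

theorem continuous_squeeze : Continuous fun q : ℝ × (ℕ → I) ↦ squeeze q.1 q.2 :=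
  continuous_pi fun n ↦ .mul (by fun_prop)
    (continuous_excessCap.comp (continuous_squeezeBudget n))

theorem squeeze_injective (hb : 0 ≤ b) : Function.Injective (squeeze b) := by
  intro v v' h
  have hbudget (n : ℕ) : squeezeBudget b v n = squeezeBudget b v' n := by
    rw [squeezeBudget_eq, squeezeBudget_eq, h]
  funext n
  have hn : (v n * excessCap (squeezeBudget b v' n) : ℝ) =
      v' n * excessCap (squeezeBudget b v' n) := by
    simpa only [squeeze, hbudget, Icc.coe_mul] using congrArg Subtype.val (congrFun h n)
  exact Subtype.ext (mul_right_cancel₀ (excessCap_pos (squeezeBudget_nonneg hb v' n)).ne' hn)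

theorem squeeze_eq_of_mul_excessCap {v : ℕ → I}
    (h : ∀ n, v n * excessCap (remainingBudget b w n) = w n) : squeeze b v = w := by
  have hbudget (n : ℕ) : squeezeBudget b v n = remainingBudget b w n := by
    induction n with
    | zero => rfl
    | succ n ih => rw [squeezeBudget, ih, h, remainingBudget]
  funext n
  rw [squeeze, hbudget, h]

theorem squeeze_eq_self (h : ∀ n, 3 ≤ remainingBudget b w n) : squeeze b w = w :=
  squeeze_eq_of_mul_excessCap fun n ↦ by rw [excessCap_of_three_le (h n), mul_one]

theorem range_squeeze (hb : 0 ≤ b) : range (squeeze b) = {w | totalExcess w ≤ b} := by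
  refine Subset.antisymm (range_subset_iff.2 fun v ↦ ?_) fun w hw ↦ ?_
  · refine totalExcess_le_of_remainingBudget_nonneg fun n ↦ ?_
    rw [← squeezeBudget_eq]
    exact squeezeBudget_nonneg hb v n
  · have hle := excess_le_remainingBudget hw
    have hnonneg (n : ℕ) := (excess_nonneg (w n)).trans (hle n)
    have hcap (n : ℕ) : w n ≤ excessCap (remainingBudget b w n) :=
      (excess_le_iff_le_excessCap (hnonneg n)).1 (hle n)
    refine ⟨fun n ↦ ⟨w n / excessCap (remainingBudget b w n),
      unitInterval.div_mem (w n).2.1 (excessCap _).2.1 (hcap n)⟩,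
      squeeze_eq_of_mul_excessCap fun n ↦ Subtype.ext ?_⟩
    exact div_mul_cancel₀ _ (excessCap_pos (hnonneg n)).ne'

end Squeeze

section Push

/-- Squeezes the slice at each height `t` into the budget `θ t`. -/
noncomputable def squeezeSlices (θ : I → ℝ) (p : I × (ℕ → I)) : I × (ℕ → I) :=
  (p.1, squeeze (θ p.1) p.2)

variable {θ : I → ℝ}

theorem continuous_squeezeSlices (hθ : Continuous θ) : Continuous (squeezeSlices θ) :=
  continuous_fst.prodMk <| continuous_squeeze.comp <|
    (hθ.comp continuous_fst).prodMk continuous_snd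

theorem squeezeSlices_injective (hθ : ∀ t, 0 ≤ θ t) : Function.Injective (squeezeSlices θ) := by
  rintro ⟨t, v⟩ ⟨t', v'⟩ h
  obtain rfl : t = t' := congrArg Prod.fst h
  exact Prod.ext rfl (squeeze_injective (hθ t) (congrArg Prod.snd h))

theorem range_squeezeSlices (hθ : ∀ t, 0 ≤ θ t) :
    range (squeezeSlices θ) = {p | totalExcess p.2 ≤ θ p.1} := by
  ext ⟨t, w⟩
  change _ ↔ w ∈ {w | totalExcess w ≤ θ t}
  rw [← range_squeeze (hθ t)]
  refine ⟨?_, ?_⟩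
  · rintro ⟨⟨s, v⟩, h⟩
    obtain ⟨rfl, rfl⟩ := Prod.mk.inj h
    exact mem_range_self v
  · rintro ⟨v, rfl⟩
    exact ⟨(t, v), rfl⟩

variable {a m : I} {u : ℕ → I}

theorem exists_rpow_eq {x y : ℝ} (hx : 0 < x) (hx' : x < 1) (hy : 0 < y) (hy' : y < 1) :
    ∃ p : ℝ, 0 < p ∧ x ^ p = y :=
  ⟨Real.logb x y, Real.logb_pos_of_base_lt_one hx hx' hy hy', Real.rpow_logb hx hx'.ne hy⟩

-- The graph of `m * (totalExcess / 10) ^ p` passes through `(a, u)` for a suitable power `p`; any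
-- constant above the maximum `9` of `totalExcess` would do in place of `10`.
theorem exists_floor_and_budget (ha : 0 < a) (ham : a < m) (hu : ∀ n, (1 / 2 : ℝ) ≤ u n) :
    ∃ (ψ : (ℕ → I) → I) (θ : I → ℝ), Continuous ψ ∧ (∀ w, ψ w < 1) ∧ Continuous θ ∧
      (∀ t, 0 ≤ θ t) ∧ (∀ (t : I) w, (m * ψ w : ℝ) ≤ t ↔ totalExcess w ≤ θ t) ∧
      (∀ t, m ≤ t → 9 ≤ θ t) ∧ (m * ψ u : ℝ) = a := by
  have hm : (0 : ℝ) < m := ha.trans ham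
  have hfrac_nonneg (w : ℕ → I) : 0 ≤ totalExcess w / 10 :=
    div_nonneg (totalExcess_nonneg w) (by norm_num)
  have hfrac_lt (w : ℕ → I) : totalExcess w / 10 < 1 := by linarith [totalExcess_le_nine w]
  have hratio_nonneg (t : I) : (0 : ℝ) ≤ t / m := div_nonneg t.2.1 hm.le
  obtain ⟨p, hp, hpu⟩ : ∃ p : ℝ, 0 < p ∧ (totalExcess u / 10) ^ p = a / m :=
    exists_rpow_eq (by linarith [three_le_totalExcess fun n ↦ one_le_excess (hu n)]) (hfrac_lt u)
      (div_pos ha hm) ((div_lt_one hm).2 ham)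
  have hpow_lt (w : ℕ → I) : (totalExcess w / 10) ^ p < 1 :=
    Real.rpow_lt_one (hfrac_nonneg w) (hfrac_lt w) hp
  refine ⟨fun w ↦ ⟨(totalExcess w / 10) ^ p, Real.rpow_nonneg (hfrac_nonneg w) p, (hpow_lt w).le⟩,
    fun t ↦ 10 * (t / m) ^ p⁻¹, ?_, hpow_lt, ?_, fun t ↦ ?_, fun t w ↦ ?_, fun t ht ↦ ?_, ?_⟩
  · exact ((continuous_totalExcess.div_const 10).rpow_const fun _ ↦ .inr hp.le).subtype_mk _
  · exact ((continuous_subtype_val.div_const _).rpow_const fun _ ↦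
      .inr (inv_nonneg.2 hp.le)).const_mul 10
  · exact mul_nonneg (by norm_num) (Real.rpow_nonneg (hratio_nonneg t) _)
  · rw [← le_div_iff₀' hm, ← div_le_iff₀' (by norm_num),
      Real.le_rpow_inv_iff_of_pos (hfrac_nonneg w) (hratio_nonneg t) hp]
  · have := Real.one_le_rpow ((one_le_div hm).2 ht) (inv_nonneg.2 hp.le)
    linarith
  · simp only [hpu]
    exact mul_div_cancel₀ _ hm.ne'

theorem exists_move_bottom_point_of_half_le (ha : 0 < a) (ham : a < m)
    (hu : ∀ n, (1 / 2 : ℝ) ≤ u n) :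
    ∃ H : I × (ℕ → I) → I × (ℕ → I), IsCollapse H ∅ ∧ H (0, u) = (a, u) ∧
      EqOn H id {p | m ≤ p.1} := by
  obtain ⟨ψ, θ, hψ, hψ_lt, hθ, hθ_nonneg, hψθ, hθ_nine, hψu⟩ := exists_floor_and_budget ha ham hu
  have hinj := squeezeSlices_injective hθ_nonneg
  have hrange : range (raise m ψ) = range (squeezeSlices θ) := by
    rw [range_raise hψ_lt, range_squeezeSlices hθ_nonneg]
    exact ext fun p ↦ hψθ p.1 p.2
  obtain ⟨H, hH, hH_eq⟩ := IsCollapse.exists_lift (S := ∅) (continuous_squeezeSlices hθ) hinj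
    (continuous_raise hψ) hrange (raise_injective hψ_lt).injOn
  refine ⟨H, hH, hinj ?_, fun p hp ↦ hinj ?_⟩
  · have hbudget : totalExcess u ≤ θ a := (hψθ a u).1 hψu.le
    have hfix : squeeze (θ a) u = u :=
      squeeze_eq_self (three_le_remainingBudget (fun n ↦ one_le_excess (hu n)) hbudget)
    rw [hH_eq]
    exact Prod.ext (Subtype.ext ((coe_fst_raise_zero u).trans hψu)) hfix.symm
  · have hfix : squeeze (θ p.1) p.2 = p.2 :=
      squeeze_eq_self fun n ↦ le_trans (by norm_num) (nine_le_remainingBudget (hθ_nine _ hp) p.2 n)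
    rw [hH_eq, raise_of_le hp]
    exact Prod.ext rfl hfix.symm

theorem exists_homeomorph_half_le (u : ℕ → I) :
    ∃ e : (ℕ → I) ≃ₜ (ℕ → I), ∀ n, (1 / 2 : ℝ) ≤ e u n := by
  have hcoord (x : I) : ∃ e : I ≃ₜ I, (1 / 2 : ℝ) ≤ e x := by
    rcases le_total (1 / 2 : ℝ) x with hx | hx
    · exact ⟨.refl I, hx⟩
    · exact ⟨symmHomeomorph, unitInterval.half_le_symm_iff x |>.2 hx⟩
  choose e he using fun n ↦ hcoord (u n)
  exact ⟨.piCongrRight e, he⟩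

theorem exists_move_bottom_point (ha : 0 < a) (ham : a < m) (u : ℕ → I) :
    ∃ H : I × (ℕ → I) → I × (ℕ → I), IsCollapse H ∅ ∧ H (0, u) = (a, u) ∧
      EqOn H id {p | m ≤ p.1} := by
  obtain ⟨e, he⟩ := exists_homeomorph_half_le u
  obtain ⟨H, hH, hHu, hH_id⟩ := exists_move_bottom_point_of_half_le ha ham he
  let E : I × (ℕ → I) ≃ₜ I × (ℕ → I) := (Homeomorph.refl I).prodCongr e
  refine ⟨E.symm ∘ H ∘ E, ?_, ?_, fun p hp ↦ ?_⟩
  · simpa using (IsCollapse.of_homeomorph E.symm).comp (hH.comp (.of_homeomorph E))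
  · exact E.symm_apply_eq.2 hHu
  · exact E.symm_apply_eq.2 (hH_id hp)

end Push

section Ends

variable {a b m : I}

theorem exists_isCollapse_bottom (ham : a < m) (u : ℕ → I) :
    ∃ D : I × (ℕ → I) → I × (ℕ → I), IsCollapse D {(a, u)} ∧
      D ⁻¹' {(a, u)} = {p | p.1 = 0} ∧ EqOn D id {p | m ≤ p.1} := by
  have ha_nonneg : 0 ≤ a := unitInterval.nonneg a
  obtain ⟨C, hC, hC_pre, hC_id⟩ := exists_isCollapse_bottom_zero (ha_nonneg.trans_lt ham) u
  rcases ha_nonneg.eq_or_lt with rfl | ha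
  · exact ⟨C, hC, hC_pre, hC_id⟩
  obtain ⟨H, hH, hHu, hH_id⟩ := exists_move_bottom_point ha ham u
  have hH_pre : H ⁻¹' {(a, u)} = {(0, u)} := by
    rw [← hHu, ← image_singleton, hH.injective.preimage_image]
  refine ⟨H ∘ C, ?_, ?_, fun p hp ↦ ?_⟩
  · simpa [hHu] using hH.comp hC
  · rw [preimage_comp, hH_pre, hC_pre]
  · rw [Function.comp_apply, hC_id hp]
    exact hH_id hp

theorem exists_isCollapse_top (hmb : m < b) (v : ℕ → I) :
    ∃ D : I × (ℕ → I) → I × (ℕ → I), IsCollapse D {(b, v)} ∧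
      D ⁻¹' {(b, v)} = {p | p.1 = 1} ∧ EqOn D id {p | p.1 ≤ m} := by
  obtain ⟨D, hD, hD_pre, hD_id⟩ := exists_isCollapse_bottom (unitInterval.symm_lt_symm.2 hmb) v
  let E : I × (ℕ → I) ≃ₜ I × (ℕ → I) := symmHomeomorph.prodCongr (.refl _)
  have hE : E.symm (unitInterval.symm b, v) = (b, v) := E.symm_apply_eq.2 rfl
  have hE_pre : E.symm ⁻¹' {(b, v)} = {(unitInterval.symm b, v)} := by
    rw [E.preimage_symm, image_singleton]
    rfl
  refine ⟨E.symm ∘ D ∘ E, ?_, ?_, fun p hp ↦ ?_⟩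
  · simpa [hE] using (IsCollapse.of_homeomorph E.symm).comp (hD.comp (.of_homeomorph E))
  · rw [preimage_comp, hE_pre, preimage_comp, hD_pre]
    exact ext fun p ↦ unitInterval.symm_eq_zero
  · exact E.symm_apply_eq.2 (hD_id (unitInterval.symm_le_symm.2 hp))

theorem exists_isCollapse_ends_of_lt {p q : I × (ℕ → I)} (hpq : p.1 < q.1) :
    ∃ f : I × (ℕ → I) → I × (ℕ → I), IsCollapse f {p, q} ∧
      f ⁻¹' {p} = {z | z.1 = 0} ∧ f ⁻¹' {q} = {z | z.1 = 1} := by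
  obtain ⟨D, hD, hD_pre, hD_id⟩ := exists_isCollapse_bottom (m := 1) (hpq.trans_le q.1.2.2) p.2
  obtain ⟨T, hT, hT_pre, hT_id⟩ := exists_isCollapse_top hpq q.2
  have hTp : T p = p := hT_id (le_refl p.1)
  have hp : T ⁻¹' {p} = {p} :=
    hT.preimage_eq_of_eqOn_id (eqOn_singleton.2 hTp) (by simpa using ne_of_apply_ne Prod.fst hpq.ne)
  have htop : D ⁻¹' {z | z.1 = 1} = {z | z.1 = 1} := by
    refine hD.preimage_eq_of_eqOn_id (fun z hz ↦ hD_id hz.ge) (disjoint_singleton_right.2 ?_)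
    exact (hpq.trans_le q.1.2.2).ne
  refine ⟨T ∘ D, ?_, ?_, ?_⟩
  · simpa [hTp, pair_comm] using hT.comp hD
  · rw [preimage_comp, hp, hD_pre]
  · rw [preimage_comp, hT_pre, htop]

theorem exists_isCollapse_ends {p q : I × (ℕ → I)} (hpq : p.1 ≠ q.1) :
    ∃ f : I × (ℕ → I) → I × (ℕ → I), IsCollapse f {p, q} ∧
      f ⁻¹' {p} = {z | z.1 = 0} ∧ f ⁻¹' {q} = {z | z.1 = 1} := by
  rcases hpq.lt_or_gt with hlt | hgt
  · exact exists_isCollapse_ends_of_lt hlt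
  obtain ⟨f, hf, hf_q, hf_p⟩ := exists_isCollapse_ends_of_lt hgt
  let E : I × (ℕ → I) ≃ₜ I × (ℕ → I) := symmHomeomorph.prodCongr (.refl _)
  refine ⟨f ∘ E, ?_, ?_, ?_⟩
  · simpa [pair_comm] using hf.comp (.of_homeomorph E)
  · rw [preimage_comp, hf_p]
    exact ext fun z ↦ unitInterval.symm_eq_one
  · rw [preimage_comp, hf_q]
    exact ext fun z ↦ unitInterval.symm_eq_zero

end Ends

theorem iccHomeoI_eq_zero_iff {a b : ℝ} (h : a < b) {x : Icc a b} :
    iccHomeoI a b h x = 0 ↔ (x : ℝ) = a := by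
  rw [Subtype.ext_iff, iccHomeoI_apply_coe, Icc.coe_zero, div_eq_zero_iff, sub_eq_zero,
    or_iff_left (sub_pos.2 h).ne']

theorem iccHomeoI_eq_one_iff {a b : ℝ} (h : a < b) {x : Icc a b} :
    iccHomeoI a b h x = 1 ↔ (x : ℝ) = b := by
  rw [Subtype.ext_iff, iccHomeoI_apply_coe, Icc.coe_one, div_eq_one_iff_eq (sub_pos.2 h).ne',
    sub_left_inj]

theorem exists_homeomorph_prod (k : ℕ) :
    ∃ e : HilbertCube ≃ₜ I × (ℕ → I),
      ∀ z, (e z).1 = iccHomeoI (-1) 1 (by norm_num) (z k) := by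
  obtain ⟨r⟩ : Nonempty ({j : ℕ // j ≠ k} ≃ ℕ) := by
    have : Infinite {j : ℕ // j ≠ k} := (finite_singleton k).infinite_compl.to_subtype
    exact nonempty_equiv_of_countable
  let c := iccHomeoI (-1 : ℝ) 1 (by norm_num)
  exact ⟨(Homeomorph.funSplitAt _ k).trans
    (c.prodCongr ((Homeomorph.piCongrLeft (Y := fun _ ↦ _) r).trans (.piCongrRight fun _ ↦ c))),
    fun _ ↦ rfl⟩

theorem exists_isCollapse_faces (x y : HilbertCube) (hxy : x ≠ y) :
    ∃ f : HilbertCube → HilbertCube, IsCollapse f {x, y} ∧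
      f ⁻¹' {x} = negFace 0 ∧ f ⁻¹' {y} = posFace 0 := by
  obtain ⟨k, hk⟩ := Function.ne_iff.1 hxy
  obtain ⟨e, he⟩ := exists_homeomorph_prod 0
  obtain ⟨e', he'⟩ := exists_homeomorph_prod k
  obtain ⟨f, hf, hf_x, hf_y⟩ := exists_isCollapse_ends (p := e' x) (q := e' y) (by
    rw [he', he']; exact (Homeomorph.injective _).ne hk)
  have hpre (z : HilbertCube) : e'.symm ⁻¹' {z} = {e' z} := by
    rw [e'.preimage_symm, image_singleton]
  refine ⟨e'.symm ∘ f ∘ e, ?_, ?_, ?_⟩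
  · simpa [image_pair] using (IsCollapse.of_homeomorph e'.symm).comp (hf.comp (.of_homeomorph e))
  · rw [preimage_comp, preimage_comp, hpre, hf_x]
    ext z
    rw [mem_preimage, mem_ofPred_eq, he]
    exact iccHomeoI_eq_zero_iff _
  · rw [preimage_comp, preimage_comp, hpre, hf_y]
    ext z
    rw [mem_preimage, mem_ofPred_eq, he]
    exact iccHomeoI_eq_one_iff _

end UnitInterval

/-- For distinct points `x, y` of the Hilbert cube there is a continuous map
`f : Q → Q` with `f(W_1^-) = {x}`, `f(W_1^+) = {y}`, whose restriction to
`Q \ (W_1^- ∪ W_1^+)` is a homeomorphism onto `Q \ {x, y}`. -/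
theorem exists_quotient_map_collapsing_faces (x y : HilbertCube) (hxy : x ≠ y) :
    ∃ f : HilbertCube → HilbertCube, Continuous f ∧
      f '' negFace 0 = {x} ∧ f '' posFace 0 = {y} ∧
      ∃ g : (((negFace 0 ∪ posFace 0)ᶜ : Set HilbertCube) ≃ₜ
          (({x, y} : Set HilbertCube)ᶜ : Set HilbertCube)),
        ∀ z : ((negFace 0 ∪ posFace 0)ᶜ : Set HilbertCube), (g z : HilbertCube) = f z := by
  obtain ⟨f, hf, hfx, hfy⟩ := exists_isCollapse_faces x y hxy
  have hfaces : f ⁻¹' {x, y} = negFace 0 ∪ posFace 0 := by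
    rw [insert_eq, preimage_union, hfx, hfy]
  obtain ⟨g, hg⟩ := hf.exists_homeomorph_compl
  refine ⟨f, hf.continuous, ?_, ?_, (Homeomorph.setCongr (by rw [hfaces])).trans g, fun z ↦ hg _⟩
  · rw [← hfx, image_preimage_eq _ hf.surjective]
  · rw [← hfy, image_preimage_eq _ hf.surjective]
end
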